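/- arXiv:2403.09889 — 6 statements merged into one kernel-verified Lean document; each statement's English description precedes it below -/
import Mathlib

section
/- Suppose V := sup_{s∈[0,1]} ∫‖θ‖₂² dν_s(θ) < ∞ and that the drift F(s,z) := α·∫σ(z,θ) dν_s(θ) is well defined and continuous on [0,1]×ℝ^d. Then for every x ∈ ℝ^d the mean-field forward ODE has exactly one C¹ solution z : [0,1] → ℝ^d with z(0) = x. -/
open MeasureTheory Real Set
open scoped RealInnerProductSpace

noncomputable section

/-- `σ(z, θ) = σ0(⟪w, z⟫ + b) • u` for `θ = (u, w, b) ∈ ℝ^d × ℝ^d × ℝ ≅ ℝ^{2d+1}`. -/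
def sigmaV (d : ℕ) (σ0 : ℝ → ℝ) (z : EuclideanSpace ℝ (Fin d))
    (θ : EuclideanSpace ℝ (Fin d) × EuclideanSpace ℝ (Fin d) × ℝ) : EuclideanSpace ℝ (Fin d) :=
  σ0 (⟪θ.2.1, z⟫ + θ.2.2) • θ.1

/-- `‖θ‖₂² = ‖u‖₂² + ‖w‖₂² + b²` for `θ = (u, w, b)`. -/
def thetaNormSq (d : ℕ) (θ : EuclideanSpace ℝ (Fin d) × EuclideanSpace ℝ (Fin d) × ℝ) : ℝ :=
  ‖θ.1‖ ^ 2 + ‖θ.2.1‖ ^ 2 + θ.2.2 ^ 2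

theorem ode_aux {E : Type*} [NormedAddCommGroup E] [NormedSpace ℝ E] [CompleteSpace E]
    (f : ℝ → E → E) (K : ℝ) (hK : 0 ≤ K)
    (hlip : ∀ t ∈ Set.Icc (0 : ℝ) 1, ∀ y z, ‖f t y - f t z‖ ≤ K * ‖y - z‖)
    (hc : ∀ y, ContinuousOn (fun t => f t y) (Set.Icc (0 : ℝ) 1)) (x : E) :
    ∃ z : ℝ → E, (z 0 = x ∧ ∀ s ∈ Set.Icc (0 : ℝ) 1,
        HasDerivWithinAt z (f s (z s)) (Set.Icc (0 : ℝ) 1) s) ∧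
      ∀ z' : ℝ → E, (z' 0 = x ∧ ∀ s ∈ Set.Icc (0 : ℝ) 1,
        HasDerivWithinAt z' (f s (z' s)) (Set.Icc (0 : ℝ) 1) s) →
        Set.EqOn z z' (Set.Icc (0 : ℝ) 1) := by
  have hIci : ∀ (g : ℝ → E) (g' : E) (s : ℝ), s ∈ Set.Ico (0 : ℝ) 1 →
      HasDerivWithinAt g g' (Set.Icc (0 : ℝ) 1) s → HasDerivWithinAt g g' (Set.Ici s) s := by
    intro g g' s hs h
    exact h.mono_of_mem_nhdsWithin (Filter.mem_of_superset (Icc_mem_nhdsGE hs.2)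
      (Set.Icc_subset_Icc_left hs.1))
  obtain ⟨M, hM⟩ := isCompact_Icc.exists_bound_of_continuousOn (hc x)
  have hM0 : 0 ≤ M := (norm_nonneg _).trans (hM 0 (by simp))
  have hgrow : ∀ t ∈ Set.Icc (0 : ℝ) 1, ∀ y, ‖f t y‖ ≤ K * ‖y - x‖ + M := by
    intro t ht y
    calc ‖f t y‖ = ‖(f t y - f t x) + f t x‖ := by simp
      _ ≤ _ := (norm_add_le _ _).trans (add_le_add (hlip t ht y x) (hM t ht))
  obtain ⟨R, hR⟩ : ∃ R, R = gronwallBound 0 K M 1 := ⟨_, rfl⟩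
  have hmono := gronwallBound_mono (δ := 0) le_rfl hM0 hK
  have hR0 : 0 ≤ R := by
    have := hmono (zero_le_one)
    rwa [gronwallBound_x0, ← hR] at this
  obtain ⟨φ, hφ⟩ : ∃ φ : E → ℝ, φ = fun y => max 0 (min 1 (R + 1 - ‖y - x‖)) := ⟨_, rfl⟩
  have hφ0 : ∀ y, 0 ≤ φ y := fun y => by rw [hφ]; exact le_max_left _ _
  have hφ1 : ∀ y, φ y ≤ 1 := fun y => by rw [hφ]; simp
  have hφl : ∀ y z, |φ y - φ z| ≤ ‖y - z‖ := by
    intro y z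
    have h1 : |‖y - x‖ - ‖z - x‖| ≤ ‖y - z‖ := by
      simpa using abs_norm_sub_norm_le (y - x) (z - x)
    rw [hφ]
    refine (abs_max_sub_max_le_max _ _ _ _).trans (max_le (by simp) ?_)
    refine (abs_min_sub_min_le_max _ _ _ _).trans (max_le (by simp) ?_)
    rw [abs_sub_comm]
    calc _ = |‖y - x‖ - ‖z - x‖| := by congr 1; ring
      _ ≤ _ := h1
  have hL0 : 0 ≤ K * (R + 1) + M := by positivity
  obtain ⟨L, hL⟩ : ∃ L : NNReal, (L : ℝ) = K * (R + 1) + M := ⟨⟨_, hL0⟩, rfl⟩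
  have hg1 : ∀ t ∈ Set.Icc (0 : ℝ) 1, ∀ y, ‖φ y • f t y‖ ≤ ‖f t y‖ := by
    intro t ht y
    rw [norm_smul, Real.norm_of_nonneg (hφ0 y)]
    exact mul_le_of_le_one_left (norm_nonneg _) (hφ1 y)
  have hgL : ∀ t ∈ Set.Icc (0 : ℝ) 1, ∀ y, ‖φ y • f t y‖ ≤ L := by
    intro t ht y
    by_cases h : ‖y - x‖ ≤ R + 1
    · refine (hg1 t ht y).trans ((hgrow t ht y).trans ?_)
      rw [hL]; gcongr
    · have : φ y = 0 := by
        rw [hφ]; push Not at h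
        exact max_eq_left ((min_le_right _ _).trans (by linarith))
      simp [this]
  obtain ⟨K', hK'⟩ : ∃ K' : NNReal, (K' : ℝ) = K + (K * L + M) := ⟨⟨_, by positivity⟩, rfl⟩
  have hPL : IsPicardLindelof (fun t y => φ y • f t y)
      (⟨0, by simp⟩ : Set.Icc (0 : ℝ) 1) x L 0 L K' := by
    refine ⟨?_, ?_, ?_, ?_⟩
    · intro t ht
      refine LipschitzOnWith.of_dist_le_mul fun y hy z hz => ?_
      rw [dist_eq_norm, dist_eq_norm, hK']
      have hz' : ‖z - x‖ ≤ L := by simpa [dist_eq_norm] using hz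
      have e : φ y • f t y - φ z • f t z = φ y • (f t y - f t z) + (φ y - φ z) • f t z := by
        module
      rw [e]
      refine (norm_add_le _ _).trans ?_
      rw [norm_smul, norm_smul, Real.norm_of_nonneg (hφ0 y), Real.norm_eq_abs, add_mul]
      have a1 : φ y * ‖f t y - f t z‖ ≤ K * ‖y - z‖ :=
        (mul_le_of_le_one_left (norm_nonneg _) (hφ1 y)).trans (hlip t ht y z)
      have a2 : ‖f t z‖ ≤ K * L + M := (hgrow t ht z).trans (by gcongr)
      have a3 : |φ y - φ z| * ‖f t z‖ ≤ ‖y - z‖ * (K * L + M) :=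
        mul_le_mul (hφl y z) a2 (norm_nonneg _) (norm_nonneg _)
      linarith
    · intro y _
      exact (hc y).const_smul (φ y)
    · intro t ht y _
      exact hgL t ht y
    · simp
  obtain ⟨z, hz0, hz⟩ := hPL.exists_eq_forall_mem_Icc_hasDerivWithinAt₀
  simp only at hz0
  have hzb : ∀ s ∈ Set.Icc (0 : ℝ) 1, ‖z s - x‖ ≤ gronwallBound 0 K M (s - 0) := by
    refine norm_le_gronwallBound_of_norm_deriv_right_le (f := fun s => z s - x)
      (f' := fun s => φ (z s) • f s (z s)) ?_ ?_ ?_ ?_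
    · exact fun s hs => ((hz s hs).sub_const x).continuousWithinAt
    · exact fun s hs => hIci _ _ s hs ((hz s (Set.Ico_subset_Icc_self hs)).sub_const x)
    · simp [hz0]
    · intro s hs
      have hs' := Set.Ico_subset_Icc_self hs
      exact (hg1 s hs' _).trans (hgrow s hs' _)
  have hzf : ∀ s ∈ Set.Icc (0 : ℝ) 1, HasDerivWithinAt z (f s (z s)) (Set.Icc (0 : ℝ) 1) s := by
    intro s hs
    have hb : ‖z s - x‖ ≤ R := by
      rw [hR]
      exact (hzb s hs).trans (hmono (by linarith [hs.2]))
    have h1 : φ (z s) = 1 := by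
      rw [hφ]
      show max 0 (min 1 (R + 1 - ‖z s - x‖)) = 1
      rw [min_eq_left (by linarith)]; simp
    have := hz s hs
    simpa [h1] using this
  refine ⟨z, ⟨hz0, hzf⟩, ?_⟩
  rintro z' ⟨hz'0, hz'⟩ s hs
  have := eq_zero_of_abs_deriv_le_mul_abs_self_of_eq_zero_right (f := fun s => z s - z' s)
    (f' := fun s => f s (z s) - f s (z' s)) (K := K) (a := 0) (b := 1)
    (fun s hs => ((hzf s hs).sub (hz' s hs)).continuousWithinAt)
    (fun s hs => hIci _ _ s hs ((hzf s (Set.Ico_subset_Icc_self hs)).sub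
      (hz' s (Set.Ico_subset_Icc_self hs)))) (by simp [hz0, hz'0])
    (fun s hs => hlip s (Set.Ico_subset_Icc_self hs) _ _) s hs
  exact sub_eq_zero.1 this

/-- existence and uniqueness of a C¹ solution of the mean-field forward ODE
`z(0) = x`, `z'(s) = α • ∫ σ(z(s), θ) dν_s(θ)` on `[0,1]`, under uniformly bounded second
moments and a well-defined continuous drift. -/
theorem statement4 (d : ℕ) (hd : 1 ≤ d) (C1 : ℝ) (hC1 : 0 < C1)
    (σ0 : ℝ → ℝ) (hσ : ContDiff ℝ 2 σ0)
    (hb0 : ∀ x : ℝ, |σ0 x| ≤ C1 * max |x| 1)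
    (hb1 : ∀ x : ℝ, |deriv σ0 x| ≤ C1)
    (hb2 : ∀ x : ℝ, |deriv (deriv σ0) x| ≤ C1)
    (α : ℝ) (hα : 0 < α)
    (ν : ℝ → Measure (EuclideanSpace ℝ (Fin d) × EuclideanSpace ℝ (Fin d) × ℝ))
    (hprob : ∀ s, IsProbabilityMeasure (ν s))
    -- V := sup_s ∫ ‖θ‖₂² dν_s < ∞ :
    (V : ℝ)
    (hmom : ∀ s ∈ Set.Icc (0 : ℝ) 1,
      Integrable (fun θ => thetaNormSq d θ) (ν s) ∧ ∫ θ, thetaNormSq d θ ∂(ν s) ≤ V)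
    -- the drift is well defined and continuous on [0,1] × ℝ^d :
    (hint : ∀ s ∈ Set.Icc (0 : ℝ) 1, ∀ z, Integrable (sigmaV d σ0 z) (ν s))
    (hcont : ContinuousOn
      (fun p : ℝ × EuclideanSpace ℝ (Fin d) => α • ∫ θ, sigmaV d σ0 p.2 θ ∂(ν p.1))
      (Set.Icc (0 : ℝ) 1 ×ˢ Set.univ)) :
    ∀ x : EuclideanSpace ℝ (Fin d),
      ∃ z : ℝ → EuclideanSpace ℝ (Fin d),
        (z 0 = x ∧ ∀ s ∈ Set.Icc (0 : ℝ) 1,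
          HasDerivWithinAt z (α • ∫ θ, sigmaV d σ0 (z s) θ ∂(ν s)) (Set.Icc (0 : ℝ) 1) s) ∧
        ∀ z' : ℝ → EuclideanSpace ℝ (Fin d),
          (z' 0 = x ∧ ∀ s ∈ Set.Icc (0 : ℝ) 1,
            HasDerivWithinAt z' (α • ∫ θ, sigmaV d σ0 (z' s) θ ∂(ν s)) (Set.Icc (0 : ℝ) 1) s) →
          Set.EqOn z z' (Set.Icc (0 : ℝ) 1) := by
  intro x
  have hV : 0 ≤ V := by
    refine le_trans (integral_nonneg fun θ => ?_) (hmom 0 (by simp)).2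
    unfold thetaNormSq
    positivity
  refine ode_aux (fun s z => α • ∫ θ, sigmaV d σ0 z θ ∂(ν s)) (α * (C1 * V)) (by positivity)
    ?_ ?_ x
  · intro t ht y z
    have hl : ∀ a b, |σ0 a - σ0 b| ≤ C1 * |a - b| := by
      intro a b
      have := Convex.norm_image_sub_le_of_norm_deriv_le (f := σ0) (s := Set.univ) (C := C1)
        (fun x _ => (hσ.differentiable (by norm_num)) x) (fun x _ => hb1 x) convex_univ
        (Set.mem_univ b) (Set.mem_univ a)
      simpa using this
    have hp : ∀ θ, ‖sigmaV d σ0 y θ - sigmaV d σ0 z θ‖ ≤ (C1 * ‖y - z‖) * thetaNormSq d θ := by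
      intro θ
      unfold sigmaV thetaNormSq
      rw [← sub_smul, norm_smul, Real.norm_eq_abs]
      have h1 := hl (⟪θ.2.1, y⟫ + θ.2.2) (⟪θ.2.1, z⟫ + θ.2.2)
      have h2 : |(⟪θ.2.1, y⟫ + θ.2.2) - (⟪θ.2.1, z⟫ + θ.2.2)| ≤ ‖θ.2.1‖ * ‖y - z‖ := by
        rw [add_sub_add_right_eq_sub, ← inner_sub_right]
        exact abs_real_inner_le_norm _ _
      have h3 : ‖θ.2.1‖ * ‖θ.1‖ ≤ ‖θ.1‖ ^ 2 + ‖θ.2.1‖ ^ 2 + θ.2.2 ^ 2 := by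
        nlinarith [sq_nonneg (‖θ.2.1‖ - ‖θ.1‖), sq_nonneg θ.2.2, sq_nonneg ‖θ.1‖,
          sq_nonneg ‖θ.2.1‖]
      calc _ ≤ (C1 * (‖θ.2.1‖ * ‖y - z‖)) * ‖θ.1‖ := by
            gcongr
            exact h1.trans (by gcongr)
        _ = (C1 * ‖y - z‖) * (‖θ.2.1‖ * ‖θ.1‖) := by ring
        _ ≤ _ := by gcongr
    rw [← smul_sub, ← integral_sub (hint t ht y) (hint t ht z), norm_smul,
      Real.norm_of_nonneg hα.le, mul_assoc]
    refine mul_le_mul_of_nonneg_left ?_ hα.le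
    calc _ ≤ ∫ θ, (C1 * ‖y - z‖) * thetaNormSq d θ ∂(ν t) :=
          norm_integral_le_of_norm_le ((hmom t ht).1.const_mul _) (Filter.Eventually.of_forall hp)
      _ = (C1 * ‖y - z‖) * ∫ θ, thetaNormSq d θ ∂(ν t) := integral_const_mul _ _
      _ ≤ (C1 * ‖y - z‖) * V := by gcongr; exact (hmom t ht).2
      _ = _ := by ring
  · intro y
    exact hcont.comp (f := fun t : ℝ => (t, y)) (by fun_prop) (fun t ht => ⟨ht, Set.mem_univ _⟩)

end
end

section
/- Let V := sup_{s∈[0,1]} ∫‖θ‖₂² dν_s(θ) < ∞ and let z : [0,1] → ℝ^d be any C¹ solution of the mean-field forward ODE with z(0) = x. Then for all s ∈ [0,1], ‖z(s)‖₂ ≤ (‖x‖₂+1)·exp(3·α·C1·(V+1)). -/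
open MeasureTheory Real Set
open scoped RealInnerProductSpace

noncomputable section

/-- a priori bound for any C¹ solution of the mean-field forward ODE:
`‖z(s)‖₂ ≤ (‖x‖₂ + 1) exp(3 α C1 (V+1))` on `[0,1]`. -/
theorem statement5 (d : ℕ) (hd : 1 ≤ d) (C1 : ℝ) (hC1 : 0 < C1)
    (σ0 : ℝ → ℝ) (hσ : ContDiff ℝ 2 σ0)
    (hb0 : ∀ x : ℝ, |σ0 x| ≤ C1 * max |x| 1)
    (hb1 : ∀ x : ℝ, |deriv σ0 x| ≤ C1)
    (hb2 : ∀ x : ℝ, |deriv (deriv σ0) x| ≤ C1)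
    (α : ℝ) (hα : 0 < α)
    (ν : ℝ → Measure (EuclideanSpace ℝ (Fin d) × EuclideanSpace ℝ (Fin d) × ℝ))
    (hprob : ∀ s, IsProbabilityMeasure (ν s))
    (V : ℝ)
    (hmom : ∀ s ∈ Set.Icc (0 : ℝ) 1,
      Integrable (fun θ => thetaNormSq d θ) (ν s) ∧ ∫ θ, thetaNormSq d θ ∂(ν s) ≤ V)
    (hint : ∀ s ∈ Set.Icc (0 : ℝ) 1, ∀ z, Integrable (sigmaV d σ0 z) (ν s))
    (x : EuclideanSpace ℝ (Fin d)) (z : ℝ → EuclideanSpace ℝ (Fin d))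
    (hz0 : z 0 = x)
    (hz : ∀ s ∈ Set.Icc (0 : ℝ) 1,
      HasDerivWithinAt z (α • ∫ θ, sigmaV d σ0 (z s) θ ∂(ν s)) (Set.Icc (0 : ℝ) 1) s) :
    ∀ s ∈ Set.Icc (0 : ℝ) 1, ‖z s‖ ≤ (‖x‖ + 1) * Real.exp (3 * α * C1 * (V + 1)) := by
  intro s hs
  have hV : 0 ≤ V := by
    have h := (hmom s hs).2
    refine le_trans (integral_nonneg fun θ => ?_) h
    simp only [thetaNormSq, Pi.zero_apply]
    positivity
  set K : ℝ := 3 * α * C1 * (V + 1) with hK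
  have hKpos : 0 < K := by positivity
  have hpt : ∀ y : EuclideanSpace ℝ (Fin d), ∀ θ,
      ‖sigmaV d σ0 y θ‖ ≤ (3 * C1 * (‖y‖ + 1)) * (thetaNormSq d θ + 1) := by
    intro y θ
    obtain ⟨u, w, b⟩ := θ
    simp only [sigmaV, thetaNormSq, norm_smul, Real.norm_eq_abs]
    have h1 : |σ0 (⟪w, y⟫ + b)| ≤ C1 * (‖w‖ * ‖y‖ + |b| + 1) := by
      refine (hb0 _).trans (mul_le_mul_of_nonneg_left ?_ hC1.le)
      have h2 : |⟪w, y⟫ + b| ≤ ‖w‖ * ‖y‖ + |b| :=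
        (abs_add_le _ _).trans (by gcongr; exact abs_real_inner_le_norm w y)
      have h3 : 0 ≤ ‖w‖ * ‖y‖ + |b| := by positivity
      exact max_le (by linarith) (by linarith)
    have hu := norm_nonneg u
    have hw := norm_nonneg w
    have hy := norm_nonneg y
    rw [← sq_abs b]
    generalize ‖u‖ = p at *
    generalize ‖w‖ = q at *
    generalize ‖y‖ = r at *
    have hb := abs_nonneg b
    generalize |b| = c at *
    have e : (q * r + c + 1) * p ≤ 3 * (r + 1) * (p ^ 2 + q ^ 2 + c ^ 2 + 1) := by
      have a1 : q * p ≤ p ^ 2 + q ^ 2 + c ^ 2 + 1 := by nlinarith [sq_nonneg (p - q)]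
      have a2 : c * p ≤ p ^ 2 + q ^ 2 + c ^ 2 + 1 := by nlinarith [sq_nonneg (p - c)]
      have a3 : p ≤ p ^ 2 + q ^ 2 + c ^ 2 + 1 := by nlinarith [sq_nonneg (p - 1)]
      have a4 := mul_le_mul_of_nonneg_left a1 hy
      have a5 : 0 ≤ r * (p ^ 2 + q ^ 2 + c ^ 2 + 1) := by positivity
      nlinarith
    calc _ ≤ C1 * (q * r + c + 1) * p := mul_le_mul_of_nonneg_right h1 hu
      _ = C1 * ((q * r + c + 1) * p) := by ring
      _ ≤ C1 * (3 * (r + 1) * (p ^ 2 + q ^ 2 + c ^ 2 + 1)) :=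
        mul_le_mul_of_nonneg_left e hC1.le
      _ = _ := by ring
  have hbound : ∀ t ∈ Set.Ico (0 : ℝ) 1,
      ‖α • ∫ θ, sigmaV d σ0 (z t) θ ∂(ν t)‖ ≤ K * ‖z t‖ + K := by
    intro t ht
    have ht' : t ∈ Set.Icc (0 : ℝ) 1 := ⟨ht.1, ht.2.le⟩
    haveI := hprob t
    obtain ⟨hi, hle⟩ := hmom t ht'
    have hi' : Integrable (fun θ => thetaNormSq d θ + 1) (ν t) :=
      hi.add (integrable_const 1)
    have h1 := norm_integral_le_of_norm_le (hi'.const_mul (3 * C1 * (‖z t‖ + 1)))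
      (Filter.Eventually.of_forall (hpt (z t)))
    rw [integral_const_mul, integral_add hi (integrable_const 1)] at h1
    simp only [integral_const, probReal_univ, smul_eq_mul, mul_one] at h1
    rw [norm_smul, Real.norm_eq_abs, abs_of_pos hα]
    calc _ ≤ α * (3 * C1 * (‖z t‖ + 1) * (V + 1)) := by
          refine mul_le_mul_of_nonneg_left (h1.trans ?_) hα.le
          gcongr
      _ = _ := by rw [hK]; ring
  have hg := norm_le_gronwallBound_of_norm_deriv_right_le (f := z) (δ := ‖x‖) (K := K) (ε := K)
    (a := 0) (b := 1) (fun t ht => (hz t ht).continuousWithinAt)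
    (fun t ht => (hz t ⟨ht.1, ht.2.le⟩).mono_of_mem_nhdsWithin (Icc_mem_nhdsGE_of_mem ht))
    (by rw [hz0]) hbound s hs
  rw [gronwallBound_of_K_ne_0 hKpos.ne', div_self hKpos.ne', sub_zero] at hg
  have he : Real.exp (K * s) ≤ Real.exp K :=
    Real.exp_le_exp.2 (by nlinarith [hs.2])
  have := mul_le_mul_of_nonneg_left he (norm_nonneg x)
  linarith

end
end

section
/- Let ν¹ = (ν¹_s)_{s∈[0,1]} and ν² = (ν²_s)_{s∈[0,1]} be two families of Borel probability measures on ℝ^{2d+1} with sup_{s} ∫‖θ‖₂² dν¹_s ≤ V and sup_{s} ∫‖θ‖₂² dν²_s ≤ V, and suppose that for each s ∈ [0,1] there is a coupling π_s of (ν¹_s, ν²_s) with ∫‖θ₁−θ₂‖₂² dπ_s(θ₁,θ₂) ≤ W². Let z₁ and z₂ be C¹ solutions of the mean-field forward ODEs driven by ν¹ and ν² respectively, with the same initial value x satisfying ‖x‖₂ ≤ 1. Then there exists a constant C > 0, depending only on d, C1, α and V, such that ‖z₁(s)−z₂(s)‖₂ ≤ C·W for all s ∈ [0,1]. -/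
open MeasureTheory Real Set
open scoped RealInnerProductSpace

noncomputable section

theorem aux_sigma_bound (d : ℕ) (C1 : ℝ) (hC1 : 0 < C1) (σ0 : ℝ → ℝ)
    (h0 : ∀ x : ℝ, |σ0 x| ≤ C1 * max |x| 1) (z : EuclideanSpace ℝ (Fin d))
    (θ : EuclideanSpace ℝ (Fin d) × EuclideanSpace ℝ (Fin d) × ℝ) :
    |σ0 (⟪θ.2.1, z⟫ + θ.2.2)| ≤ C1 * (‖θ.2.1‖ * ‖z‖ + |θ.2.2| + 1) := by
  refine (h0 _).trans (mul_le_mul_of_nonneg_left ?_ hC1.le)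
  have h1 : |⟪θ.2.1, z⟫ + θ.2.2| ≤ ‖θ.2.1‖ * ‖z‖ + |θ.2.2| :=
    (abs_add_le _ _).trans (add_le_add (abs_real_inner_le_norm _ _) le_rfl)
  have h2 : 0 ≤ ‖θ.2.1‖ * ‖z‖ + |θ.2.2| := by positivity
  exact max_le (by linarith) (by linarith)

theorem aux_growth (d : ℕ) (C1 : ℝ) (hC1 : 0 < C1) (σ0 : ℝ → ℝ)
    (h0 : ∀ x : ℝ, |σ0 x| ≤ C1 * max |x| 1) (z : EuclideanSpace ℝ (Fin d))
    (θ : EuclideanSpace ℝ (Fin d) × EuclideanSpace ℝ (Fin d) × ℝ) :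
    ‖sigmaV d σ0 z θ‖ ≤ C1 * (‖z‖ + 2) * thetaNormSq d θ + C1 := by
  unfold sigmaV thetaNormSq
  rw [norm_smul, Real.norm_eq_abs]
  refine (mul_le_mul_of_nonneg_right (aux_sigma_bound d C1 hC1 σ0 h0 z θ) (norm_nonneg _)).trans ?_
  rw [← sq_abs θ.2.2]
  generalize ‖θ.1‖ = u
  generalize ‖θ.2.1‖ = w
  generalize |θ.2.2| = b
  have hz := norm_nonneg z
  revert hz
  generalize ‖z‖ = r
  intro hz
  have e1 : w * u ≤ u ^ 2 + w ^ 2 + b ^ 2 := by nlinarith [sq_nonneg (w - u), sq_nonneg (w + u), sq_nonneg b]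
  have e2 : b * u ≤ u ^ 2 + w ^ 2 + b ^ 2 := by
    nlinarith [sq_nonneg (b - u), sq_nonneg (b + u), sq_nonneg w]
  have e3 : u ≤ u ^ 2 + w ^ 2 + b ^ 2 + 1 := by
    nlinarith [sq_nonneg (u - 1), sq_nonneg w, sq_nonneg b, sq_nonneg u]
  have e4 := mul_le_mul_of_nonneg_left e1 hz
  have e5 : (w * r + b + 1) * u ≤ (r + 2) * (u ^ 2 + w ^ 2 + b ^ 2) + 1 := by nlinarith
  have e6 := mul_le_mul_of_nonneg_left e5 hC1.le
  nlinarith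

theorem aux_diff (d : ℕ) (C1 : ℝ) (hC1 : 0 < C1) (σ0 : ℝ → ℝ)
    (h0 : ∀ x : ℝ, |σ0 x| ≤ C1 * max |x| 1) (hL : ∀ x y : ℝ, |σ0 x - σ0 y| ≤ C1 * |x - y|)
    (R : ℝ) (z₁ z₂ : EuclideanSpace ℝ (Fin d)) (hz : ‖z₁‖ ≤ R) (ε : ℝ) (hε : 0 < ε)
    (p q : EuclideanSpace ℝ (Fin d) × EuclideanSpace ℝ (Fin d) × ℝ) :
    ‖sigmaV d σ0 z₁ p - sigmaV d σ0 z₂ q‖ ≤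
      C1 * (3 / 2 * ε * (R ^ 2 + 1)) * thetaNormSq d p +
      C1 * (‖z₁ - z₂‖ + ε / 2) * thetaNormSq d q +
      C1 * ((R ^ 2 + 3 / 2) / ε) * thetaNormSq d (p - q) + C1 * (3 / 2 * ε) := by
  have hR : 0 ≤ R := (norm_nonneg _).trans hz
  have hs : sigmaV d σ0 z₁ p - sigmaV d σ0 z₂ q =
      σ0 (⟪p.2.1, z₁⟫ + p.2.2) • (p.1 - q.1) +
      (σ0 (⟪p.2.1, z₁⟫ + p.2.2) - σ0 (⟪q.2.1, z₂⟫ + q.2.2)) • q.1 := by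
    unfold sigmaV
    rw [smul_sub, sub_smul]; abel
  have ha : |σ0 (⟪p.2.1, z₁⟫ + p.2.2)| ≤ C1 * (‖p.2.1‖ * R + |p.2.2| + 1) := by
    refine (aux_sigma_bound d C1 hC1 σ0 h0 z₁ p).trans (mul_le_mul_of_nonneg_left ?_ hC1.le)
    gcongr
  have hb : |σ0 (⟪p.2.1, z₁⟫ + p.2.2) - σ0 (⟪q.2.1, z₂⟫ + q.2.2)| ≤
      C1 * (‖p.2.1 - q.2.1‖ * R + ‖q.2.1‖ * ‖z₁ - z₂‖ + |p.2.2 - q.2.2|) := by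
    refine (hL _ _).trans (mul_le_mul_of_nonneg_left ?_ hC1.le)
    have : ⟪p.2.1, z₁⟫ + p.2.2 - (⟪q.2.1, z₂⟫ + q.2.2) =
        ⟪p.2.1 - q.2.1, z₁⟫ + ⟪q.2.1, z₁ - z₂⟫ + (p.2.2 - q.2.2) := by
      rw [inner_sub_left, inner_sub_right]; ring
    rw [this]
    refine (abs_add_three _ _ _).trans ?_
    gcongr
    · exact (abs_real_inner_le_norm _ _).trans (by gcongr)
    · exact abs_real_inner_le_norm _ _
  rw [hs]
  refine (norm_add_le _ _).trans ?_
  rw [norm_smul, norm_smul, Real.norm_eq_abs, Real.norm_eq_abs]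
  refine (add_le_add (mul_le_mul_of_nonneg_right ha (norm_nonneg _))
    (mul_le_mul_of_nonneg_right hb (norm_nonneg _))).trans ?_
  unfold thetaNormSq
  simp only [Prod.fst_sub, Prod.snd_sub]
  rw [← sq_abs p.2.2, ← sq_abs q.2.2, ← sq_abs (p.2.2 - q.2.2)]
  have hz0 := norm_nonneg (z₁ - z₂)
  revert hz0
  generalize ‖z₁ - z₂‖ = δ
  generalize ‖p.1 - q.1‖ = du
  generalize ‖p.2.1 - q.2.1‖ = dw
  generalize |p.2.2 - q.2.2| = db
  generalize ‖p.1‖ = u1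
  generalize ‖q.1‖ = u2
  generalize ‖p.2.1‖ = w1
  generalize ‖q.2.1‖ = w2
  generalize |p.2.2| = b1
  generalize |q.2.2| = b2
  intro hδ
  have amgm : ∀ x y : ℝ, x * y ≤ ε / 2 * x ^ 2 + (1 / (2 * ε)) * y ^ 2 := by
    intro x y
    have : ε / 2 * x ^ 2 + (1 / (2 * ε)) * y ^ 2 - x * y = (1 / (2 * ε)) * (ε * x - y) ^ 2 := by
      field_simp; ring
    have h2 : 0 ≤ (1 / (2 * ε)) * (ε * x - y) ^ 2 := by positivity
    linarith
  have k1 : (w1 * R + b1 + 1) * du ≤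
      3 / 2 * ε * (R ^ 2 + 1) * (u1 ^ 2 + w1 ^ 2 + b1 ^ 2) + 3 / 2 * ε
        + 1 / (2 * ε) * (du ^ 2 + dw ^ 2 + db ^ 2) := by
    refine (amgm _ _).trans ?_
    have e1 : (w1 * R + b1 + 1) ^ 2 ≤ 3 * ((R ^ 2 + 1) * (u1 ^ 2 + w1 ^ 2 + b1 ^ 2)) + 3 := by
      nlinarith [sq_nonneg (w1 * R - b1), sq_nonneg (w1 * R - 1), sq_nonneg (b1 - 1),
        mul_nonneg (sq_nonneg R) (sq_nonneg u1), mul_nonneg (sq_nonneg R) (sq_nonneg b1),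
        sq_nonneg u1, sq_nonneg w1]
    have e2 := mul_le_mul_of_nonneg_left e1 (by positivity : 0 ≤ ε / 2)
    have e3 : 1 / (2 * ε) * du ^ 2 ≤ 1 / (2 * ε) * (du ^ 2 + dw ^ 2 + db ^ 2) := by
      apply mul_le_mul_of_nonneg_left _ (by positivity)
      nlinarith [sq_nonneg dw, sq_nonneg db]
    nlinarith
  have k2 : u2 * (dw * R + db) ≤ ε / 2 * (u2 ^ 2 + w2 ^ 2 + b2 ^ 2) +
      (R ^ 2 + 1) / ε * (du ^ 2 + dw ^ 2 + db ^ 2) := by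
    refine (amgm _ _).trans ?_
    have e1 : (dw * R + db) ^ 2 ≤ 2 * ((R ^ 2 + 1) * (du ^ 2 + dw ^ 2 + db ^ 2)) := by
      nlinarith [sq_nonneg (dw * R - db), mul_nonneg (sq_nonneg R) (sq_nonneg du),
        mul_nonneg (sq_nonneg R) (sq_nonneg db), sq_nonneg du, sq_nonneg dw, sq_nonneg db]
    have e2 := mul_le_mul_of_nonneg_left e1 (by positivity : 0 ≤ 1 / (2 * ε))
    have e3 : 1 / (2 * ε) * (2 * ((R ^ 2 + 1) * (du ^ 2 + dw ^ 2 + db ^ 2))) =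
        (R ^ 2 + 1) / ε * (du ^ 2 + dw ^ 2 + db ^ 2) := by field_simp
    have e4 : ε / 2 * u2 ^ 2 ≤ ε / 2 * (u2 ^ 2 + w2 ^ 2 + b2 ^ 2) := by
      apply mul_le_mul_of_nonneg_left _ (by positivity)
      nlinarith [sq_nonneg w2, sq_nonneg b2]
    linarith
  have k3 : δ * (w2 * u2) ≤ δ * (u2 ^ 2 + w2 ^ 2 + b2 ^ 2) := by
    apply mul_le_mul_of_nonneg_left _ hδ
    nlinarith [sq_nonneg (w2 - u2), sq_nonneg (w2 + u2), sq_nonneg b2]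
  have k4 : (R ^ 2 + 3 / 2) / ε = (R ^ 2 + 1) / ε + 1 / (2 * ε) := by field_simp; ring
  rw [k4]
  have k5 := mul_le_mul_of_nonneg_left (add_le_add (add_le_add k1 k2) k3) hC1.le
  refine le_trans (le_of_eq ?_) (k5.trans (le_of_eq ?_)) <;> ring

theorem aux_bound (d : ℕ) (C1 : ℝ) (hC1 : 0 < C1) (α : ℝ) (hα : 0 < α) (M : ℝ) (hM : 0 < M)
    (σ0 : ℝ → ℝ) (h0 : ∀ x : ℝ, |σ0 x| ≤ C1 * max |x| 1)
    (ν : ℝ → Measure (EuclideanSpace ℝ (Fin d) × EuclideanSpace ℝ (Fin d) × ℝ))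
    (hp : ∀ s, IsProbabilityMeasure (ν s))
    (hν : ∀ s ∈ Set.Icc (0 : ℝ) 1,
        Integrable (fun θ => thetaNormSq d θ) (ν s) ∧ ∫ θ, thetaNormSq d θ ∂(ν s) ≤ M)
    (x : EuclideanSpace ℝ (Fin d)) (hx : ‖x‖ ≤ 1) (z : ℝ → EuclideanSpace ℝ (Fin d))
    (hz0 : z 0 = x)
    (hz : ∀ s ∈ Set.Icc (0 : ℝ) 1,
        HasDerivWithinAt z (α • ∫ θ, sigmaV d σ0 (z s) θ ∂(ν s)) (Set.Icc (0 : ℝ) 1) s) :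
    ∀ s ∈ Set.Icc (0 : ℝ) 1, ‖z s‖ ≤ Real.exp (α * C1 * M) +
      (α * C1 * (2 * M + 1)) / (α * C1 * M) * Real.exp (α * C1 * M) := by
  intro s hs
  have hK : 0 < α * C1 * M := by positivity
  have key := norm_le_gronwallBound_of_norm_deriv_right_le (f := z)
    (f' := fun s => α • ∫ θ, sigmaV d σ0 (z s) θ ∂(ν s)) (δ := 1) (K := α * C1 * M)
    (ε := α * C1 * (2 * M + 1)) (a := 0) (b := 1)
    (fun s hs => (hz s hs).continuousWithinAt)
    (fun s hs => (hz s (Ico_subset_Icc_self hs)).mono_of_mem_nhdsWithin (Icc_mem_nhdsGE_of_mem hs))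
    (by rw [hz0]; exact hx) ?_ s hs
  · refine key.trans ?_
    rw [gronwallBound_of_K_ne_0 hK.ne']
    simp only [sub_zero, one_mul]
    have he : Real.exp (α * C1 * M * s) ≤ Real.exp (α * C1 * M) := by
      apply Real.exp_le_exp.2
      nlinarith [hs.2]
    have hc : 0 ≤ (α * C1 * (2 * M + 1)) / (α * C1 * M) := by positivity
    have := mul_le_mul_of_nonneg_left (show Real.exp (α * C1 * M * s) - 1 ≤ Real.exp (α * C1 * M)
      by linarith) hc
    linarith
  · intro t ht
    have ht' := Ico_subset_Icc_self ht
    have := hp t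
    rw [norm_smul, Real.norm_eq_abs, abs_of_pos hα]
    have h1 : ‖∫ θ, sigmaV d σ0 (z t) θ ∂(ν t)‖ ≤
        ∫ θ, (C1 * (‖z t‖ + 2) * thetaNormSq d θ + C1) ∂(ν t) := by
      apply norm_integral_le_of_norm_le
      · exact ((hν t ht').1.const_mul _).add (integrable_const _)
      · exact Filter.Eventually.of_forall fun θ => aux_growth d C1 hC1 σ0 h0 (z t) θ
    rw [integral_add ((hν t ht').1.const_mul _) (integrable_const _), integral_const_mul] at h1
    simp only [integral_const, probReal_univ, one_smul] at h1
    have h2 := mul_le_mul_of_nonneg_left (hν t ht').2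
      (by positivity : 0 ≤ C1 * (‖z t‖ + 2))
    have h3 := mul_le_mul_of_nonneg_left (h1.trans (add_le_add h2 le_rfl)) hα.le
    refine h3.trans (le_of_eq ?_)
    ring

theorem aux_int (d : ℕ) (C1 : ℝ) (hC1 : 0 < C1) (M : ℝ) (hM : 0 < M)
    (σ0 : ℝ → ℝ) (h0 : ∀ x : ℝ, |σ0 x| ≤ C1 * max |x| 1)
    (hL : ∀ x y : ℝ, |σ0 x - σ0 y| ≤ C1 * |x - y|)
    (ν₁ ν₂ : Measure (EuclideanSpace ℝ (Fin d) × EuclideanSpace ℝ (Fin d) × ℝ))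
    (hp : IsProbabilityMeasure ν₁)
    (hν₁ : Integrable (fun θ => thetaNormSq d θ) ν₁ ∧ ∫ θ, thetaNormSq d θ ∂ν₁ ≤ M)
    (hν₂ : Integrable (fun θ => thetaNormSq d θ) ν₂ ∧ ∫ θ, thetaNormSq d θ ∂ν₂ ≤ M)
    (hi₁ : ∀ z, Integrable (sigmaV d σ0 z) ν₁) (hi₂ : ∀ z, Integrable (sigmaV d σ0 z) ν₂)
    (ε : ℝ) (hε : 0 < ε)
    (P : Measure ((EuclideanSpace ℝ (Fin d) × EuclideanSpace ℝ (Fin d) × ℝ) ×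
                          (EuclideanSpace ℝ (Fin d) × EuclideanSpace ℝ (Fin d) × ℝ)))
    (hP1 : P.map Prod.fst = ν₁) (hP2 : P.map Prod.snd = ν₂)
    (hP3 : Integrable (fun p => thetaNormSq d (p.1 - p.2)) P)
    (hP4 : ∫ p, thetaNormSq d (p.1 - p.2) ∂P ≤ ε ^ 2)
    (R : ℝ) (z₁ z₂ : EuclideanSpace ℝ (Fin d)) (hz : ‖z₁‖ ≤ R) :
    ‖∫ θ, sigmaV d σ0 z₁ θ ∂ν₁ - ∫ θ, sigmaV d σ0 z₂ θ ∂ν₂‖ ≤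
      C1 * M * ‖z₁ - z₂‖ +
      C1 * (3 / 2 * (R ^ 2 + 1) * M + M / 2 + (R ^ 2 + 3 / 2) + 3 / 2) * ε := by
  have hPp : IsProbabilityMeasure P := by
    constructor
    rw [← hp.measure_univ, ← hP1, Measure.map_apply measurable_fst MeasurableSet.univ,
      Set.preimage_univ]
  subst hP1 hP2
  have mf : AEMeasurable Prod.fst P := measurable_fst.aemeasurable
  have ms : AEMeasurable Prod.snd P := measurable_snd.aemeasurable
  have i1 := hν₁.1.comp_aemeasurable mf
  have i2 := hν₂.1.comp_aemeasurable ms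
  have b1 := hν₁.2
  have b2 := hν₂.2
  rw [integral_map mf hν₁.1.aestronglyMeasurable] at b1
  rw [integral_map ms hν₂.1.aestronglyMeasurable] at b2
  have s1 : Integrable (fun p => sigmaV d σ0 z₁ p.1) P := (hi₁ z₁).comp_aemeasurable mf
  have s2 : Integrable (fun p => sigmaV d σ0 z₂ p.2) P := (hi₂ z₂).comp_aemeasurable ms
  have e1 : ∫ θ, sigmaV d σ0 z₁ θ ∂(P.map Prod.fst) = ∫ p, sigmaV d σ0 z₁ p.1 ∂P :=
    integral_map mf (hi₁ z₁).aestronglyMeasurable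
  have e2 : ∫ θ, sigmaV d σ0 z₂ θ ∂(P.map Prod.snd) = ∫ p, sigmaV d σ0 z₂ p.2 ∂P :=
    integral_map ms (hi₂ z₂).aestronglyMeasurable
  have e3 := integral_sub s1 s2
  rw [e1, e2, ← e3]
  simp only [Function.comp_def] at i1 i2
  have j1 := i1.const_mul (C1 * (3 / 2 * ε * (R ^ 2 + 1)))
  have j2 := i2.const_mul (C1 * (‖z₁ - z₂‖ + ε / 2))
  have j3 := hP3.const_mul (C1 * ((R ^ 2 + 3 / 2) / ε))
  have j4 : Integrable (fun _ => C1 * (3 / 2 * ε)) P := integrable_const _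
  have j12 : Integrable (fun p => C1 * (3 / 2 * ε * (R ^ 2 + 1)) * thetaNormSq d p.1 +
      C1 * (‖z₁ - z₂‖ + ε / 2) * thetaNormSq d p.2) P := j1.add j2
  have j123 : Integrable (fun p => C1 * (3 / 2 * ε * (R ^ 2 + 1)) * thetaNormSq d p.1 +
      C1 * (‖z₁ - z₂‖ + ε / 2) * thetaNormSq d p.2 +
      C1 * ((R ^ 2 + 3 / 2) / ε) * thetaNormSq d (p.1 - p.2)) P := j12.add j3
  have h1 : ‖∫ p, (sigmaV d σ0 z₁ p.1 - sigmaV d σ0 z₂ p.2) ∂P‖ ≤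
      ∫ p, (C1 * (3 / 2 * ε * (R ^ 2 + 1)) * thetaNormSq d p.1 +
      C1 * (‖z₁ - z₂‖ + ε / 2) * thetaNormSq d p.2 +
      C1 * ((R ^ 2 + 3 / 2) / ε) * thetaNormSq d (p.1 - p.2) + C1 * (3 / 2 * ε)) ∂P := by
    apply norm_integral_le_of_norm_le
    · exact j123.add j4
    · exact Filter.Eventually.of_forall fun p =>
        aux_diff d C1 hC1 σ0 h0 hL R z₁ z₂ hz ε hε p.1 p.2
  refine h1.trans ?_
  rw [integral_add j123 j4, integral_add j12 j3, integral_add j1 j2,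
    integral_const_mul, integral_const_mul, integral_const_mul]
  simp only [integral_const, probReal_univ, one_smul]
  have k1 := mul_le_mul_of_nonneg_left b1 (by positivity : 0 ≤ C1 * (3 / 2 * ε * (R ^ 2 + 1)))
  have k2 := mul_le_mul_of_nonneg_left b2 (by positivity : 0 ≤ C1 * (‖z₁ - z₂‖ + ε / 2))
  have k3 := mul_le_mul_of_nonneg_left hP4 (by positivity : 0 ≤ C1 * ((R ^ 2 + 3 / 2) / ε))
  have k4 : C1 * ((R ^ 2 + 3 / 2) / ε) * ε ^ 2 = C1 * (R ^ 2 + 3 / 2) * ε := by field_simp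
  rw [k4] at k3
  refine (add_le_add (add_le_add (add_le_add k1 k2) k3) le_rfl).trans (le_of_eq ?_)
  ring

/-- stability in the driving measures of solutions of the mean-field forward ODE.
If the two families are `W`-close in the (coupling formulation of the) 2-Wasserstein distance,
uniformly in `s`, then the two solutions from the same initial point `x`, `‖x‖₂ ≤ 1`, stay
`C·W`-close, with `C` depending only on `d`, `C1`, `α` and `V`. -/
theorem statement6 (d : ℕ) (hd : 1 ≤ d) (C1 : ℝ) (hC1 : 0 < C1) (α : ℝ) (hα : 0 < α) (V : ℝ) :
    ∃ C > 0, ∀ σ0 : ℝ → ℝ, ContDiff ℝ 2 σ0 →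
      (∀ x : ℝ, |σ0 x| ≤ C1 * max |x| 1) →
      (∀ x : ℝ, |deriv σ0 x| ≤ C1) →
      (∀ x : ℝ, |deriv (deriv σ0) x| ≤ C1) →
      ∀ ν₁ ν₂ : ℝ → Measure (EuclideanSpace ℝ (Fin d) × EuclideanSpace ℝ (Fin d) × ℝ),
      (∀ s, IsProbabilityMeasure (ν₁ s)) → (∀ s, IsProbabilityMeasure (ν₂ s)) →
      (∀ s ∈ Set.Icc (0 : ℝ) 1,
        Integrable (fun θ => thetaNormSq d θ) (ν₁ s) ∧ ∫ θ, thetaNormSq d θ ∂(ν₁ s) ≤ V) →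
      (∀ s ∈ Set.Icc (0 : ℝ) 1,
        Integrable (fun θ => thetaNormSq d θ) (ν₂ s) ∧ ∫ θ, thetaNormSq d θ ∂(ν₂ s) ≤ V) →
      (∀ s ∈ Set.Icc (0 : ℝ) 1, ∀ z, Integrable (sigmaV d σ0 z) (ν₁ s)) →
      (∀ s ∈ Set.Icc (0 : ℝ) 1, ∀ z, Integrable (sigmaV d σ0 z) (ν₂ s)) →
      ∀ W : ℝ, 0 ≤ W →
      -- for each s, a coupling π_s of (ν₁_s, ν₂_s) with ∫ ‖θ₁ − θ₂‖₂² dπ_s ≤ W² :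
      ∀ Pi : ℝ → Measure ((EuclideanSpace ℝ (Fin d) × EuclideanSpace ℝ (Fin d) × ℝ) ×
                          (EuclideanSpace ℝ (Fin d) × EuclideanSpace ℝ (Fin d) × ℝ)),
      (∀ s ∈ Set.Icc (0 : ℝ) 1,
        (Pi s).map Prod.fst = ν₁ s ∧ (Pi s).map Prod.snd = ν₂ s ∧
        Integrable (fun p => thetaNormSq d (p.1 - p.2)) (Pi s) ∧
        ∫ p, thetaNormSq d (p.1 - p.2) ∂(Pi s) ≤ W ^ 2) →
      ∀ x : EuclideanSpace ℝ (Fin d), ‖x‖ ≤ 1 →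
      ∀ z₁ z₂ : ℝ → EuclideanSpace ℝ (Fin d),
      z₁ 0 = x → z₂ 0 = x →
      (∀ s ∈ Set.Icc (0 : ℝ) 1,
        HasDerivWithinAt z₁ (α • ∫ θ, sigmaV d σ0 (z₁ s) θ ∂(ν₁ s)) (Set.Icc (0 : ℝ) 1) s) →
      (∀ s ∈ Set.Icc (0 : ℝ) 1,
        HasDerivWithinAt z₂ (α • ∫ θ, sigmaV d σ0 (z₂ s) θ ∂(ν₂ s)) (Set.Icc (0 : ℝ) 1) s) →
      ∀ s ∈ Set.Icc (0 : ℝ) 1, ‖z₁ s - z₂ s‖ ≤ C * W := by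
  obtain ⟨M, hMdef⟩ : ∃ M, M = |V| + 1 := ⟨_, rfl⟩
  have hM : 0 < M := by rw [hMdef]; positivity
  have hVM : V ≤ M := by rw [hMdef]; linarith [le_abs_self V]
  obtain ⟨R, hR⟩ : ∃ R, R = Real.exp (α * C1 * M) +
      (α * C1 * (2 * M + 1)) / (α * C1 * M) * Real.exp (α * C1 * M) := ⟨_, rfl⟩
  obtain ⟨A, hA⟩ : ∃ A, A = α * (C1 * (3 / 2 * (R ^ 2 + 1) * M + M / 2 + (R ^ 2 + 3 / 2) + 3 / 2)) :=
    ⟨_, rfl⟩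
  have hA0 : 0 < A := by rw [hA]; positivity
  have hK : 0 < α * C1 * M := by positivity
  refine ⟨A / (α * C1 * M) * Real.exp (α * C1 * M), by positivity, ?_⟩
  intro σ0 hσ h0 h1 _ ν₁ ν₂ hp₁ hp₂ hν₁ hν₂ hi₁ hi₂ W hW Pi hPi x hx z₁ z₂ hz₁0 hz₂0 hz₁ hz₂ s hs
  have hL : ∀ x y : ℝ, |σ0 x - σ0 y| ≤ C1 * |x - y| := by
    intro x y
    exact convex_univ.norm_image_sub_le_of_norm_deriv_le (f := σ0) (𝕜 := ℝ)
      (fun x _ => (hσ.differentiable (by norm_num)) x) (fun x _ => h1 x) (mem_univ y) (mem_univ x)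
  have hzb := aux_bound d C1 hC1 α hα M hM σ0 h0 ν₁ hp₁
    (fun s hs => ⟨(hν₁ s hs).1, (hν₁ s hs).2.trans hVM⟩) x hx z₁ hz₁0 hz₁
  rw [← hR] at hzb
  have main : ∀ ε : ℝ, W < ε →
      ‖z₁ s - z₂ s‖ ≤ A / (α * C1 * M) * Real.exp (α * C1 * M) * ε := by
    intro ε hWε
    have hε : 0 < ε := hW.trans_lt hWε
    have key := norm_le_gronwallBound_of_norm_deriv_right_le (f := fun s => z₁ s - z₂ s)
      (f' := fun s => α • ∫ θ, sigmaV d σ0 (z₁ s) θ ∂(ν₁ s) - α • ∫ θ, sigmaV d σ0 (z₂ s) θ ∂(ν₂ s))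
      (δ := 0) (K := α * C1 * M) (ε := A * ε) (a := 0) (b := 1)
      (fun s hs => ((hz₁ s hs).sub (hz₂ s hs)).continuousWithinAt)
      (fun s hs => ((hz₁ s (Ico_subset_Icc_self hs)).sub
        (hz₂ s (Ico_subset_Icc_self hs))).mono_of_mem_nhdsWithin (Icc_mem_nhdsGE_of_mem hs))
      (by simp [hz₁0, hz₂0]) ?_ s hs
    · refine key.trans ?_
      rw [gronwallBound_of_K_ne_0 hK.ne']
      simp only [sub_zero, zero_mul, zero_add]
      have he : Real.exp (α * C1 * M * s) ≤ Real.exp (α * C1 * M) := by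
        apply Real.exp_le_exp.2
        nlinarith [hs.2]
      have hc : 0 ≤ A * ε / (α * C1 * M) := by positivity
      refine (mul_le_mul_of_nonneg_left (show Real.exp (α * C1 * M * s) - 1 ≤
        Real.exp (α * C1 * M) by linarith) hc).trans (le_of_eq ?_)
      ring
    · intro t ht
      have ht' := Ico_subset_Icc_self ht
      obtain ⟨q1, q2, q3, q4⟩ := hPi t ht'
      have hint := aux_int d C1 hC1 M hM σ0 h0 hL (ν₁ t) (ν₂ t) (hp₁ t)
        ⟨(hν₁ t ht').1, (hν₁ t ht').2.trans hVM⟩ ⟨(hν₂ t ht').1, (hν₂ t ht').2.trans hVM⟩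
        (hi₁ t ht') (hi₂ t ht') ε hε (Pi t) q1 q2 q3
        (q4.trans (pow_le_pow_left₀ hW hWε.le 2)) R (z₁ t) (z₂ t) (hzb t ht')
      rw [← smul_sub, norm_smul, Real.norm_eq_abs, abs_of_pos hα]
      refine (mul_le_mul_of_nonneg_left hint hα.le).trans (le_of_eq ?_)
      rw [hA]; ring
  have hB : 0 < A / (α * C1 * M) * Real.exp (α * C1 * M) := by positivity
  rw [mul_comm, ← div_le_iff₀ hB]
  refine le_of_forall_gt_imp_ge_of_dense fun ε h => ?_
  rw [div_le_iff₀ hB, mul_comm]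
  exact main ε h

end
end

section
/- Let τ and τ₀ be Borel probability measures on ℝ^{d+2} with ∫‖ω‖₂⁴ dτ ≤ T and ∫‖ω‖₂⁴ dτ₀ ≤ T, and let π be a coupling of (τ, τ₀) with (∫‖ω−ω₀‖₂² dπ(ω,ω₀))^{1/2} ≤ W. Let z₁,…,zₙ and z₁⁰,…,zₙ⁰ be points of ℝ^d with ‖zᵢ‖₂ ≤ B, ‖zᵢ⁰‖₂ ≤ B and ‖zᵢ−zᵢ⁰‖₂ ≤ δ for all i ∈ [n]. Define the n×n matrices G and G⁰ by G_{ij} = ∫ ⟨∇_ωh(zᵢ,ω), ∇_ωh(zⱼ,ω)⟩ dτ(ω) and G⁰_{ij} = ∫ ⟨∇_ωh(zᵢ⁰,ω₀), ∇_ωh(zⱼ⁰,ω₀)⟩ dτ₀(ω₀). Then there exists a constant C > 0, depending only on d, C1, B and T, such that |G_{ij} − G⁰_{ij}| ≤ C·(W + δ) for all i, j ∈ [n]. -/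
open MeasureTheory Real Set
open scoped RealInnerProductSpace

noncomputable section

/-- `‖ω‖₂² = a² + ‖w‖₂² + b²` for `ω = (a, w, b) ∈ ℝ × ℝ^d × ℝ ≅ ℝ^{d+2}`. -/
def omegaNormSq (d : ℕ) (ω : ℝ × EuclideanSpace ℝ (Fin d) × ℝ) : ℝ :=
  ω.1 ^ 2 + ‖ω.2.1‖ ^ 2 + ω.2.2 ^ 2

/-- `⟨∇_ωh(z,ω), ∇_ωh(z',ω)⟩` for `ω = (a,w,b)`, where
`∇_ωh(z,ω) = (σ0(⟪w,z⟫+b), a σ0'(⟪w,z⟫+b) z, a σ0'(⟪w,z⟫+b)) ∈ ℝ^{d+2}`. -/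
def gradOmegaInner (d : ℕ) (σ0 : ℝ → ℝ) (z z' : EuclideanSpace ℝ (Fin d))
    (ω : ℝ × EuclideanSpace ℝ (Fin d) × ℝ) : ℝ :=
  σ0 (⟪ω.2.1, z⟫ + ω.2.2) * σ0 (⟪ω.2.1, z'⟫ + ω.2.2) +
    ⟪(ω.1 * deriv σ0 (⟪ω.2.1, z⟫ + ω.2.2)) • z, (ω.1 * deriv σ0 (⟪ω.2.1, z'⟫ + ω.2.2)) • z'⟫ +
    (ω.1 * deriv σ0 (⟪ω.2.1, z⟫ + ω.2.2)) * (ω.1 * deriv σ0 (⟪ω.2.1, z'⟫ + ω.2.2))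

lemma aux_prod {x x0 y y0 X X' Y Y' : ℝ} (hx : |x| ≤ X) (hy0 : |y0| ≤ Y)
    (hxx : |x - x0| ≤ X') (hyy : |y - y0| ≤ Y') :
    |x * y - x0 * y0| ≤ X * Y' + X' * Y := by
  have h : x * y - x0 * y0 = x * (y - y0) + (x - x0) * y0 := by ring
  rw [h]
  refine (abs_add_le _ _).trans ?_
  rw [abs_mul, abs_mul]
  have := abs_nonneg x
  have := abs_nonneg (x - x0)
  have := abs_nonneg y0
  have := abs_nonneg (y - y0)
  gcongr
  all_goals linarith

lemma aux_scalar {f f' f0 f0' g g' g0 g0' p p0 S b M E : ℝ} (hS : 0 ≤ S) (hb : 1 ≤ b)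
    (hM : 1 ≤ M) (hE : 0 ≤ E)
    (hf : |f| ≤ S * b * M) (hf0' : |f0'| ≤ S * b * M)
    (hff : |f - f0| ≤ S * b * E) (hff' : |f' - f0'| ≤ S * b * E)
    (hg : |g| ≤ S * M) (hg' : |g'| ≤ S * M) (hg0' : |g0'| ≤ S * M)
    (hgg : |g - g0| ≤ 2 * S * b * M * E) (hgg' : |g' - g0'| ≤ 2 * S * b * M * E)
    (hp0 : |p0| ≤ b ^ 2) (hpp : |p - p0| ≤ 2 * b * E) :
    |(f * f' + g * g' * p + g * g') - (f0 * f0' + g0 * g0' * p0 + g0 * g0')|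
      ≤ 12 * S ^ 2 * b ^ 3 * (M ^ 2 * E) := by
  have h1 := aux_prod hf hf0' hff hff'
  have h2 := aux_prod hg hg0' hgg hgg'
  have h3 : |g * g'| ≤ (S * M) * (S * M) := by
    rw [abs_mul]; gcongr
  have h4 := aux_prod h3 hp0 h2 hpp
  have e : (f * f' + g * g' * p + g * g') - (f0 * f0' + g0 * g0' * p0 + g0 * g0')
     = (f * f' - f0 * f0') + (g * g' * p - g0 * g0' * p0) + (g * g' - g0 * g0') := by ring
  rw [e]
  refine (abs_add_three _ _ _).trans ?_
  have hSE : 0 ≤ S ^ 2 * E := by positivity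
  have hb2 : b ≤ b ^ 3 := le_self_pow₀ hb (by norm_num)
  have hb3 : b ^ 2 ≤ b ^ 3 := pow_le_pow_right₀ hb (by norm_num)
  have hM2 : M ≤ M ^ 2 := le_self_pow₀ hM (by norm_num)
  have k1 : b ^ 2 * M ≤ b ^ 3 * M ^ 2 := by gcongr
  have k2 : b * M ^ 2 ≤ b ^ 3 * M ^ 2 := by gcongr
  have k1' := mul_le_mul_of_nonneg_left k1 hSE
  have k2' := mul_le_mul_of_nonneg_left k2 hSE
  nlinarith [h1, h2, h4, k1', k2']

lemma aux_lip (f : ℝ → ℝ) (hf : Differentiable ℝ f) (C : ℝ) (h : ∀ x, |deriv f x| ≤ C) (x y : ℝ) :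
    |f x - f y| ≤ C * |x - y| := by
  have := Convex.norm_image_sub_le_of_norm_deriv_le (f := f) (C := C) (s := Set.univ)
    (x := y) (y := x) (fun x _ => hf x) (fun x _ => h x) convex_univ trivial trivial
  simpa using this

lemma omegaNormSq_nonneg (d : ℕ) (ω) : 0 ≤ omegaNormSq d ω := by
  unfold omegaNormSq; positivity

lemma aux_coord (d : ℕ) (ω) : |ω.1| ≤ √(omegaNormSq d ω) ∧ ‖ω.2.1‖ ≤ √(omegaNormSq d ω) ∧
    |ω.2.2| ≤ √(omegaNormSq d ω) := by
  refine ⟨?_, ?_, ?_⟩ <;> apply Real.le_sqrt_of_sq_le <;> unfold omegaNormSq <;>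
    (try rw [sq_abs]) <;> nlinarith [sq_nonneg ω.1, sq_nonneg ‖ω.2.1‖, sq_nonneg ω.2.2]

lemma aux_u (d : ℕ) {B : ℝ} (ω : ℝ × EuclideanSpace ℝ (Fin d) × ℝ) (z : EuclideanSpace ℝ (Fin d))
    (hz : ‖z‖ ≤ B) : |⟪ω.2.1, z⟫ + ω.2.2| ≤ (B + 1) * √(omegaNormSq d ω) := by
  obtain ⟨-, h2, h3⟩ := aux_coord d ω
  have h := abs_real_inner_le_norm ω.2.1 z
  have h' : ‖ω.2.1‖ * ‖z‖ ≤ √(omegaNormSq d ω) * B := by gcongr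
  have := abs_add_le ⟪ω.2.1, z⟫ ω.2.2
  linarith

lemma aux_f (d : ℕ) {B C1 M : ℝ} (hC1 : 0 < C1) (σ0 : ℝ → ℝ)
    (hσ : ∀ x : ℝ, |σ0 x| ≤ C1 * max |x| 1)
    (ω : ℝ × EuclideanSpace ℝ (Fin d) × ℝ) (z : EuclideanSpace ℝ (Fin d))
    (hz : ‖z‖ ≤ B) (hM : 1 ≤ M) (hωM : √(omegaNormSq d ω) ≤ M) :
    |σ0 (⟪ω.2.1, z⟫ + ω.2.2)| ≤ C1 * (B + 1) * M := by
  have hB : 0 ≤ B := (norm_nonneg z).trans hz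
  refine (hσ _).trans ?_
  rw [mul_assoc]
  gcongr
  refine max_le ((aux_u d ω z hz).trans (by gcongr)) ?_
  nlinarith

lemma aux_g (d : ℕ) {C1 M : ℝ} (hC1 : 0 < C1) (σ0 : ℝ → ℝ)
    (hσ : ∀ x : ℝ, |deriv σ0 x| ≤ C1)
    (ω : ℝ × EuclideanSpace ℝ (Fin d) × ℝ) (u : ℝ) (hωM : √(omegaNormSq d ω) ≤ M) :
    |ω.1 * deriv σ0 u| ≤ C1 * M := by
  rw [abs_mul, mul_comm]
  have := (aux_coord d ω).1.trans hωM
  have := hσ u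
  gcongr

lemma aux_udiff (d : ℕ) {B M δ D : ℝ} (ω ω0 : ℝ × EuclideanSpace ℝ (Fin d) × ℝ)
    (z z0 : EuclideanSpace ℝ (Fin d)) (hD : √(omegaNormSq d (ω - ω0)) = D)
    (hz : ‖z‖ ≤ B) (hzz : ‖z - z0‖ ≤ δ) (hM : 0 ≤ M) (hωM : √(omegaNormSq d ω0) ≤ M) :
    |(⟪ω.2.1, z⟫ + ω.2.2) - (⟪ω0.2.1, z0⟫ + ω0.2.2)| ≤ (B + 1) * (D + M * δ) := by
  have hB : 0 ≤ B := (norm_nonneg z).trans hz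
  have hδ : 0 ≤ δ := (norm_nonneg _).trans hzz
  obtain ⟨-, h2, h3⟩ := aux_coord d (ω - ω0)
  rw [hD] at h2 h3
  have h4 := (aux_coord d ω0).2.1.trans hωM
  have e : (⟪ω.2.1, z⟫ + ω.2.2) - (⟪ω0.2.1, z0⟫ + ω0.2.2) =
    ⟪(ω - ω0).2.1, z⟫ + ⟪ω0.2.1, z - z0⟫ + (ω - ω0).2.2 := by
    simp [inner_sub_left, inner_sub_right]; ring
  rw [e]
  refine (abs_add_three _ _ _).trans ?_
  have i1 := abs_real_inner_le_norm (ω - ω0).2.1 z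
  have i2 := abs_real_inner_le_norm ω0.2.1 (z - z0)
  have j1 : ‖(ω - ω0).2.1‖ * ‖z‖ ≤ D * B := by
    have : 0 ≤ D := hD ▸ Real.sqrt_nonneg _
    gcongr
  have j2 : ‖ω0.2.1‖ * ‖z - z0‖ ≤ M * δ := by gcongr
  nlinarith [mul_nonneg hB (mul_nonneg hM hδ)]

lemma grad_eq (d : ℕ) (σ0 : ℝ → ℝ) (z z' : EuclideanSpace ℝ (Fin d)) (ω) :
    gradOmegaInner d σ0 z z' ω =
    σ0 (⟪ω.2.1, z⟫ + ω.2.2) * σ0 (⟪ω.2.1, z'⟫ + ω.2.2) +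
    (ω.1 * deriv σ0 (⟪ω.2.1, z⟫ + ω.2.2)) * (ω.1 * deriv σ0 (⟪ω.2.1, z'⟫ + ω.2.2)) * ⟪z, z'⟫ +
    (ω.1 * deriv σ0 (⟪ω.2.1, z⟫ + ω.2.2)) * (ω.1 * deriv σ0 (⟪ω.2.1, z'⟫ + ω.2.2)) := by
  unfold gradOmegaInner
  rw [real_inner_smul_left, real_inner_smul_right]; ring

lemma aux_gdiff (d : ℕ) {B C1 M δ D : ℝ} (hC1 : 0 < C1) (σ0 : ℝ → ℝ) (hc : ContDiff ℝ 2 σ0)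
    (h1 : ∀ x : ℝ, |deriv σ0 x| ≤ C1) (h2 : ∀ x : ℝ, |deriv (deriv σ0) x| ≤ C1)
    (ω ω0 : ℝ × EuclideanSpace ℝ (Fin d) × ℝ)
    (z z0 : EuclideanSpace ℝ (Fin d)) (hD : √(omegaNormSq d (ω - ω0)) = D)
    (hz : ‖z‖ ≤ B) (hzz : ‖z - z0‖ ≤ δ) (hM : 1 ≤ M) (hωM : √(omegaNormSq d ω0) ≤ M) :
    |ω.1 * deriv σ0 (⟪ω.2.1, z⟫ + ω.2.2) - ω0.1 * deriv σ0 (⟪ω0.2.1, z0⟫ + ω0.2.2)|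
      ≤ 2 * C1 * (B + 1) * M * (D + M * δ) := by
  have hB : 0 ≤ B := (norm_nonneg z).trans hz
  have hδ : 0 ≤ δ := (norm_nonneg _).trans hzz
  have hD0 : 0 ≤ D := hD ▸ Real.sqrt_nonneg _
  have hdd : Differentiable ℝ (deriv σ0) :=
    ((contDiff_succ_iff_deriv (n := 1)).1 hc).2.2.differentiable (by norm_num)
  have hu := aux_udiff d ω ω0 z z0 hD hz hzz (by linarith) hωM
  have hl := aux_lip _ hdd C1 h2 (⟪ω.2.1, z⟫ + ω.2.2) (⟪ω0.2.1, z0⟫ + ω0.2.2)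
  set u := ⟪ω.2.1, z⟫ + ω.2.2
  set u0 := ⟪ω0.2.1, z0⟫ + ω0.2.2
  have e : ω.1 * deriv σ0 u - ω0.1 * deriv σ0 u0 =
    (ω - ω0).1 * deriv σ0 u + ω0.1 * (deriv σ0 u - deriv σ0 u0) := by
    simp; ring
  rw [e]
  refine (abs_add_le _ _).trans ?_
  rw [abs_mul, abs_mul]
  have i1 := (aux_coord d (ω - ω0)).1
  rw [hD] at i1
  have i2 := (aux_coord d ω0).1.trans hωM
  have j1 : |(ω - ω0).1| * |deriv σ0 u| ≤ D * C1 := by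
    have := h1 u
    gcongr
  have j2 : |ω0.1| * |deriv σ0 u - deriv σ0 u0| ≤ M * (C1 * ((B + 1) * (D + M * δ))) := by
    have : |deriv σ0 u - deriv σ0 u0| ≤ C1 * ((B + 1) * (D + M * δ)) := hl.trans (by gcongr)
    gcongr
  have j3 : D * C1 ≤ (D + M * δ) * C1 * ((B + 1) * M) := by
    have hb : 1 ≤ (B + 1) * M := by nlinarith
    have : D ≤ D + M * δ := by have : 0 ≤ M * δ := by positivity
                               linarith
    calc D * C1 ≤ (D + M * δ) * C1 := by gcongr
      _ ≤ _ := le_mul_of_one_le_right (by positivity) hb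
  linarith

lemma aux_point (d : ℕ) {B C1 M δ D : ℝ} (hC1 : 0 < C1) (σ0 : ℝ → ℝ) (hc : ContDiff ℝ 2 σ0)
    (h0 : ∀ x : ℝ, |σ0 x| ≤ C1 * max |x| 1)
    (h1 : ∀ x : ℝ, |deriv σ0 x| ≤ C1) (h2 : ∀ x : ℝ, |deriv (deriv σ0) x| ≤ C1)
    (ω ω0 : ℝ × EuclideanSpace ℝ (Fin d) × ℝ)
    (z z0 z' z0' : EuclideanSpace ℝ (Fin d)) (hD : √(omegaNormSq d (ω - ω0)) = D)
    (hz : ‖z‖ ≤ B) (hz0 : ‖z0‖ ≤ B) (hzz : ‖z - z0‖ ≤ δ)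
    (hz' : ‖z'‖ ≤ B) (hz0' : ‖z0'‖ ≤ B) (hzz' : ‖z' - z0'‖ ≤ δ)
    (hM : 1 ≤ M) (hωM : √(omegaNormSq d ω) ≤ M) (hωM0 : √(omegaNormSq d ω0) ≤ M) :
    |gradOmegaInner d σ0 z z' ω - gradOmegaInner d σ0 z0 z0' ω0|
      ≤ 12 * C1 ^ 2 * (B + 1) ^ 3 * (M ^ 2 * (D + M * δ)) := by
  have hB : 0 ≤ B := (norm_nonneg z).trans hz
  have hδ : 0 ≤ δ := (norm_nonneg _).trans hzz
  have hD0 : 0 ≤ D := hD ▸ Real.sqrt_nonneg _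
  have hdf : Differentiable ℝ σ0 := hc.differentiable (by norm_num)
  have hE : δ ≤ D + M * δ := by nlinarith
  rw [grad_eq, grad_eq]
  apply aux_scalar hC1.le (by linarith) hM (by positivity)
  · exact aux_f d hC1 σ0 h0 ω z hz hM hωM
  · exact aux_f d hC1 σ0 h0 ω0 z0' hz0' hM hωM0
  · refine (aux_lip σ0 hdf C1 h1 _ _).trans ?_
    rw [mul_assoc]
    gcongr
    exact aux_udiff d ω ω0 z z0 hD hz hzz (by linarith) hωM0
  · refine (aux_lip σ0 hdf C1 h1 _ _).trans ?_
    rw [mul_assoc]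
    gcongr
    exact aux_udiff d ω ω0 z' z0' hD hz' hzz' (by linarith) hωM0
  · exact aux_g d hC1 σ0 h1 ω _ hωM
  · exact aux_g d hC1 σ0 h1 ω _ hωM
  · exact aux_g d hC1 σ0 h1 ω0 _ hωM0
  · exact aux_gdiff d hC1 σ0 hc h1 h2 ω ω0 z z0 hD hz hzz hM hωM0
  · exact aux_gdiff d hC1 σ0 hc h1 h2 ω ω0 z' z0' hD hz' hzz' hM hωM0
  · refine (abs_real_inner_le_norm z0 z0').trans ?_
    have : ‖z0‖ * ‖z0'‖ ≤ B * B := by gcongr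
    nlinarith
  · have e : ⟪z, z'⟫ - ⟪z0, z0'⟫ = ⟪z, z' - z0'⟫ + ⟪z - z0, z0'⟫ := by
      simp [inner_sub_left, inner_sub_right]
    rw [e]
    refine (abs_add_le _ _).trans ?_
    have i1 := abs_real_inner_le_norm z (z' - z0')
    have i2 := abs_real_inner_le_norm (z - z0) z0'
    have j1 : ‖z‖ * ‖z' - z0'‖ ≤ (B + 1) * (D + M * δ) := by
      have : ‖z‖ ≤ B + 1 := by linarith
      have := hzz'.trans hE
      gcongr
    have j2 : ‖z - z0‖ * ‖z0'‖ ≤ (D + M * δ) * (B + 1) := by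
      have : ‖z0'‖ ≤ B + 1 := by linarith
      have := hzz.trans hE
      gcongr
    linarith

lemma aux_cont_N (d : ℕ) : Continuous (omegaNormSq d) := by
  unfold omegaNormSq; fun_prop

lemma aux_cont (d : ℕ) (σ0 : ℝ → ℝ) (hc : ContDiff ℝ 2 σ0) (z z' : EuclideanSpace ℝ (Fin d)) :
    Continuous (gradOmegaInner d σ0 z z') := by
  have h1 : Continuous σ0 := hc.continuous
  have h2 : Continuous (deriv σ0) := hc.continuous_deriv (by norm_num)
  unfold gradOmegaInner; fun_prop

lemma aux_int_s14 (d : ℕ) {B C1 : ℝ} (hC1 : 0 < C1) (σ0 : ℝ → ℝ) (hc : ContDiff ℝ 2 σ0)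
    (h0 : ∀ x : ℝ, |σ0 x| ≤ C1 * max |x| 1)
    (h1 : ∀ x : ℝ, |deriv σ0 x| ≤ C1)
    (z z' : EuclideanSpace ℝ (Fin d))
    (hz : ‖z‖ ≤ B) (hz' : ‖z'‖ ≤ B)
    (τ : Measure (ℝ × EuclideanSpace ℝ (Fin d) × ℝ)) [IsProbabilityMeasure τ]
    (hτ : Integrable (fun ω => omegaNormSq d ω ^ 2) τ) :
    Integrable (gradOmegaInner d σ0 z z') τ := by
  have hB : 0 ≤ B := (norm_nonneg z).trans hz
  have hi : Integrable (fun ω => ((C1 * (B + 1)) * (C1 * (B + 1)) + C1 * C1 * (B * B) + C1 * C1) *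
      (3 + omegaNormSq d ω ^ 2)) τ := ((integrable_const _).add hτ).const_mul _
  refine hi.mono' (aux_cont d σ0 hc z z').aestronglyMeasurable (Filter.Eventually.of_forall ?_)
  intro ω
  have hN := omegaNormSq_nonneg d ω
  set M := √(omegaNormSq d ω) + 1 with hMd
  have hs := Real.sqrt_nonneg (omegaNormSq d ω)
  have hM : 1 ≤ M := by linarith
  have hωM : √(omegaNormSq d ω) ≤ M := by linarith
  have hM2 : M * M ≤ 3 + omegaNormSq d ω ^ 2 := by
    have := Real.sq_sqrt hN
    nlinarith [sq_nonneg (√(omegaNormSq d ω) - 1), sq_nonneg (omegaNormSq d ω - 1)]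
  rw [grad_eq, Real.norm_eq_abs]
  have f1 := aux_f d hC1 σ0 h0 ω z hz hM hωM
  have f2 := aux_f d hC1 σ0 h0 ω z' hz' hM hωM
  have g1 := aux_g d hC1 σ0 h1 ω (⟪ω.2.1, z⟫ + ω.2.2) hωM
  have g2 := aux_g d hC1 σ0 h1 ω (⟪ω.2.1, z'⟫ + ω.2.2) hωM
  have p := abs_real_inner_le_norm z z'
  have p' : |⟪z, z'⟫| ≤ B * B := p.trans (by gcongr)
  calc _ ≤ _ := abs_add_three _ _ _
    _ ≤ (C1 * (B + 1) * M) * (C1 * (B + 1) * M) + (C1 * M) * (C1 * M) * (B * B)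
        + (C1 * M) * (C1 * M) := by
      rw [abs_mul (_ * _) (inner ℝ z z')]
      rw [abs_mul (σ0 _), abs_mul (ω.1 * _)]
      gcongr
    _ = ((C1 * (B + 1)) * (C1 * (B + 1)) + C1 * C1 * (B * B) + C1 * C1) * (M * M) := by ring
    _ ≤ _ := by gcongr

lemma aux_pow4 {r s : ℝ} : (1 + r + s) ^ 4 ≤ 27 * (1 + r ^ 4 + s ^ 4) := by
  have h1 : (1 + r + s) ^ 2 ≤ 3 * (1 + r ^ 2 + s ^ 2) := by
    nlinarith [sq_nonneg (r - 1), sq_nonneg (s - 1), sq_nonneg (r - s)]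
  have h2 : (1 + r ^ 2 + s ^ 2) ^ 2 ≤ 3 * (1 + r ^ 4 + s ^ 4) := by
    nlinarith [sq_nonneg (r ^ 2 - 1), sq_nonneg (s ^ 2 - 1), sq_nonneg (r ^ 2 - s ^ 2)]
  have h3 : ((1 + r + s) ^ 2) ^ 2 ≤ (3 * (1 + r ^ 2 + s ^ 2)) ^ 2 := by gcongr
  nlinarith

/-- entrywise perturbation bound for the Gram matrices
`G_{ij} = ∫ ⟨∇_ωh(zᵢ,ω), ∇_ωh(zⱼ,ω)⟩ dτ(ω)` and
`G⁰_{ij} = ∫ ⟨∇_ωh(zᵢ⁰,ω₀), ∇_ωh(zⱼ⁰,ω₀)⟩ dτ₀(ω₀)`: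
`|G_{ij} − G⁰_{ij}| ≤ C (W + δ)` with `C` depending only on `d`, `C1`, `B` and `T`. -/
theorem statement14 (d : ℕ) (hd : 1 ≤ d) (C1 : ℝ) (hC1 : 0 < C1) (B T : ℝ) :
    ∃ C > 0, ∀ σ0 : ℝ → ℝ, ContDiff ℝ 2 σ0 →
      (∀ x : ℝ, |σ0 x| ≤ C1 * max |x| 1) →
      (∀ x : ℝ, |deriv σ0 x| ≤ C1) →
      (∀ x : ℝ, |deriv (deriv σ0) x| ≤ C1) →
      ∀ τ τ₀ : Measure (ℝ × EuclideanSpace ℝ (Fin d) × ℝ),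
      IsProbabilityMeasure τ → IsProbabilityMeasure τ₀ →
      -- fourth moments bounded by T :
      (Integrable (fun ω => omegaNormSq d ω ^ 2) τ ∧ ∫ ω, omegaNormSq d ω ^ 2 ∂τ ≤ T) →
      (Integrable (fun ω => omegaNormSq d ω ^ 2) τ₀ ∧ ∫ ω, omegaNormSq d ω ^ 2 ∂τ₀ ≤ T) →
      -- a coupling π of (τ, τ₀) with (∫ ‖ω − ω₀‖₂² dπ)^{1/2} ≤ W :
      ∀ W : ℝ,
      ∀ Pi : Measure ((ℝ × EuclideanSpace ℝ (Fin d) × ℝ) × (ℝ × EuclideanSpace ℝ (Fin d) × ℝ)),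
      Pi.map Prod.fst = τ → Pi.map Prod.snd = τ₀ →
      Integrable (fun q => omegaNormSq d (q.1 - q.2)) Pi →
      Real.sqrt (∫ q, omegaNormSq d (q.1 - q.2) ∂Pi) ≤ W →
      ∀ (n : ℕ) (z z0 : Fin n → EuclideanSpace ℝ (Fin d)) (δ : ℝ),
      (∀ i, ‖z i‖ ≤ B) → (∀ i, ‖z0 i‖ ≤ B) → (∀ i, ‖z i - z0 i‖ ≤ δ) →
      ∀ i j : Fin n,
        |(∫ ω, gradOmegaInner d σ0 (z i) (z j) ω ∂τ) -
          (∫ ω, gradOmegaInner d σ0 (z0 i) (z0 j) ω ∂τ₀)| ≤ C * (W + δ) := by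
  refine ⟨12 * C1 ^ 2 * (|B| + 1) ^ 3 * (1 + 27 * (1 + 2 * |T|)), by positivity, ?_⟩
  intro σ0 hc h0 h1 h2 τ τ₀ hpτ hpτ₀ ⟨hI, hT⟩ ⟨hI0, hT0⟩ W Pi hfst hsnd hPi hW n z z0 δ hz hz0 hzz i j
  have hB : 0 ≤ B := (norm_nonneg _).trans (hz i)
  have hδ : 0 ≤ δ := (norm_nonneg _).trans (hzz i)
  rw [abs_of_nonneg hB]
  have hW0 : 0 ≤ W := (Real.sqrt_nonneg _).trans hW
  have hTa := le_abs_self T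
  have hPp : IsProbabilityMeasure Pi := by
    constructor
    have : (Pi.map Prod.fst) Set.univ = 1 := by rw [hfst]; simp
    rwa [Measure.map_apply measurable_fst MeasurableSet.univ, Set.preimage_univ] at this
  have hD2 : ∫ q, omegaNormSq d (q.1 - q.2) ∂Pi ≤ W ^ 2 := by
    have := (Real.sqrt_le_left hW0).1 hW
    exact this
  have hG := aux_int_s14 d hC1 σ0 hc h0 h1 (z i) (z j) (hz i) (hz j) τ hI
  have hG0 := aux_int_s14 d hC1 σ0 hc h0 h1 (z0 i) (z0 j) (hz0 i) (hz0 j) τ₀ hI0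
  subst hfst hsnd
  have mf : AEMeasurable (Prod.fst : (ℝ × EuclideanSpace ℝ (Fin d) × ℝ) ×
    (ℝ × EuclideanSpace ℝ (Fin d) × ℝ) → _) Pi := measurable_fst.aemeasurable
  have ms : AEMeasurable (Prod.snd : (ℝ × EuclideanSpace ℝ (Fin d) × ℝ) ×
    (ℝ × EuclideanSpace ℝ (Fin d) × ℝ) → _) Pi := measurable_snd.aemeasurable
  rw [integral_map mf hG.aestronglyMeasurable, integral_map ms hG0.aestronglyMeasurable]
  rw [integral_map mf hI.aestronglyMeasurable] at hT
  rw [integral_map ms hI0.aestronglyMeasurable] at hT0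
  replace hI := hI.comp_aemeasurable mf
  replace hI0 := hI0.comp_aemeasurable ms
  replace hG := hG.comp_aemeasurable mf
  replace hG0 := hG0.comp_aemeasurable ms
  simp only [Function.comp_def] at hI hI0 hG hG0
  rw [← integral_sub hG hG0]
  set K := 12 * C1 ^ 2 * (B + 1) ^ 3 with hK
  have hK0 : 0 ≤ K := by positivity
  have key : ∀ V > W, |∫ q, (gradOmegaInner d σ0 (z i) (z j) q.1 -
      gradOmegaInner d σ0 (z0 i) (z0 j) q.2) ∂Pi| ≤ K * (1 + 27 * (1 + 2 * |T|)) * (V + δ) := by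
    intro V hV
    have hV0 : 0 < V := by linarith
    have hS : Integrable (fun q : (ℝ × EuclideanSpace ℝ (Fin d) × ℝ) ×
        (ℝ × EuclideanSpace ℝ (Fin d) × ℝ) =>
        1 + omegaNormSq d q.1 ^ 2 + omegaNormSq d q.2 ^ 2) Pi :=
      ((integrable_const _).add hI).add hI0
    have hS1 : Integrable (fun q : (ℝ × EuclideanSpace ℝ (Fin d) × ℝ) ×
        (ℝ × EuclideanSpace ℝ (Fin d) × ℝ) => (V + δ) * 27 *
        (1 + omegaNormSq d q.1 ^ 2 + omegaNormSq d q.2 ^ 2)) Pi := hS.const_mul _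
    have hS2 : Integrable (fun q : (ℝ × EuclideanSpace ℝ (Fin d) × ℝ) ×
        (ℝ × EuclideanSpace ℝ (Fin d) × ℝ) => V⁻¹ * omegaNormSq d (q.1 - q.2)) Pi :=
      hPi.const_mul _
    have hb : ∀ q : (ℝ × EuclideanSpace ℝ (Fin d) × ℝ) × (ℝ × EuclideanSpace ℝ (Fin d) × ℝ),
        ‖gradOmegaInner d σ0 (z i) (z j) q.1 - gradOmegaInner d σ0 (z0 i) (z0 j) q.2‖ ≤
        K * ((V + δ) * 27 * (1 + omegaNormSq d q.1 ^ 2 + omegaNormSq d q.2 ^ 2) +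
          V⁻¹ * omegaNormSq d (q.1 - q.2)) := by
      intro q
      have s1 := Real.sqrt_nonneg (omegaNormSq d q.1)
      have s2 := Real.sqrt_nonneg (omegaNormSq d q.2)
      have hp := aux_point d (M := 1 + √(omegaNormSq d q.1) + √(omegaNormSq d q.2))
        hC1 σ0 hc h0 h1 h2 q.1 q.2 (z i) (z0 i) (z j) (z0 j) rfl
        (hz i) (hz0 i) (hzz i) (hz j) (hz0 j) (hzz j) (by linarith) (by linarith) (by linarith)
      refine hp.trans ?_
      refine mul_le_mul_of_nonneg_left ?_ hK0
      have h4 := aux_pow4 (r := √(omegaNormSq d q.1)) (s := √(omegaNormSq d q.2))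
      have e4 : ∀ ω, √(omegaNormSq d ω) ^ 4 = omegaNormSq d ω ^ 2 := fun ω => by
        rw [show 4 = 2 * 2 by norm_num, pow_mul, Real.sq_sqrt (omegaNormSq_nonneg d ω)]
      rw [e4, e4] at h4
      have hDD := Real.sq_sqrt (omegaNormSq_nonneg d (q.1 - q.2))
      have hM : 1 ≤ 1 + √(omegaNormSq d q.1) + √(omegaNormSq d q.2) := by linarith
      generalize 1 + √(omegaNormSq d q.1) + √(omegaNormSq d q.2) = M at *
      have hD0 := Real.sqrt_nonneg (omegaNormSq d (q.1 - q.2))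
      generalize √(omegaNormSq d (q.1 - q.2)) = D at *
      rw [← hDD]
      have a1 : M ^ 2 * D ≤ V * M ^ 4 + V⁻¹ * D ^ 2 := by
        have e : V * M ^ 4 + V⁻¹ * D ^ 2 - M ^ 2 * D =
            V⁻¹ * ((V * M ^ 2 - D / 2) ^ 2 + 3 / 4 * D ^ 2) := by
          field_simp; ring
        have : 0 ≤ V⁻¹ * ((V * M ^ 2 - D / 2) ^ 2 + 3 / 4 * D ^ 2) := by positivity
        linarith
      have a2 : M ^ 3 * δ ≤ M ^ 4 * δ := by
        have : M ^ 3 ≤ M ^ 4 := pow_le_pow_right₀ hM (by norm_num)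
        gcongr
      have a3 := mul_le_mul_of_nonneg_left h4 (by positivity : 0 ≤ V + δ)
      linarith
    have hn := norm_integral_le_of_norm_le ((hS1.add hS2).const_mul K)
      (Filter.Eventually.of_forall hb)
    rw [Real.norm_eq_abs] at hn
    refine hn.trans ?_
    rw [mul_assoc K, integral_const_mul]
    refine mul_le_mul_of_nonneg_left ?_ hK0
    have hS3 : Integrable (fun q : (ℝ × EuclideanSpace ℝ (Fin d) × ℝ) ×
        (ℝ × EuclideanSpace ℝ (Fin d) × ℝ) => 1 + omegaNormSq d q.1 ^ 2) Pi :=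
      (integrable_const _).add hI
    have ea : ∫ q, ((V + δ) * 27 * (1 + omegaNormSq d q.1 ^ 2 + omegaNormSq d q.2 ^ 2) +
          V⁻¹ * omegaNormSq d (q.1 - q.2)) ∂Pi = (V + δ) * 27 * (1 +
          (∫ q, omegaNormSq d q.1 ^ 2 ∂Pi) + (∫ q, omegaNormSq d q.2 ^ 2 ∂Pi)) +
          V⁻¹ * ∫ q, omegaNormSq d (q.1 - q.2) ∂Pi := by
      rw [integral_add hS1 hS2, integral_const_mul, integral_const_mul,
        integral_add hS3 hI0, integral_add (integrable_const _) hI]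
      simp
    refine (le_of_eq ea).trans ?_
    have b1 : V⁻¹ * ∫ q, omegaNormSq d (q.1 - q.2) ∂Pi ≤ V := by
      rw [inv_mul_le_iff₀ hV0]
      nlinarith
    have b2 : (V + δ) * 27 * (1 +
          (∫ q, omegaNormSq d q.1 ^ 2 ∂Pi) + (∫ q, omegaNormSq d q.2 ^ 2 ∂Pi)) ≤
        (V + δ) * 27 * (1 + 2 * |T|) := by
      refine mul_le_mul_of_nonneg_left ?_ (by positivity)
      linarith
    linarith
  have hcont : Filter.Tendsto (fun V => K * (1 + 27 * (1 + 2 * |T|)) * (V + δ))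
      (nhdsWithin W (Set.Ioi W)) (nhds (K * (1 + 27 * (1 + 2 * |T|)) * (W + δ))) :=
    Filter.Tendsto.mono_left (Continuous.tendsto (by fun_prop) W) nhdsWithin_le_nhds
  exact ge_of_tendsto hcont (Filter.eventually_of_mem self_mem_nhdsWithin key)


end
end

section
/- Let τ and τ' be Borel probability measures on ℝ^{d+2} with second moments at most T, and let ν = (ν_s)_{s∈[0,1]} and ν' = (ν'_s)_{s∈[0,1]} be families of Borel probability measures on ℝ^{2d+1} with sup_s second moments at most V. Let z and z' be C¹ solutions of the mean-field forward ODEs driven by ν and ν' respectively, with the same initial point x satisfying ‖x‖₂ ≤ 1. Assume KL(τ‖τ') < ∞, that there is a coupling π of (τ, τ') with ∫‖ω−ω'‖₂² dπ ≤ 4·KL(τ‖τ'), and that there is K ≥ 0 such that for each s ∈ [0,1] there is a coupling π_s of (ν_s, ν'_s) with ∫‖θ−θ'‖₂² dπ_s ≤ 4K. Then there exists a constant C > 0, depending only on d, C1, α, V and T, such that ∫ h(z(1),ω) dτ(ω) − ∫ h(z'(1),ω') dτ'(ω') ≤ C·(√(KL(τ‖τ')) + √K). -/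
open MeasureTheory Real Set
open scoped RealInnerProductSpace

noncomputable section

/-- The Kullback–Leibler divergence `KL(μ‖λ) = ∫ log(dμ/dλ) dμ` (as a real number). -/
def klReal {X : Type*} [MeasurableSpace X] (μ lam : Measure X) : ℝ :=
  ∫ x, Real.log ((μ.rnDeriv lam x).toReal) ∂μ

/-- general squared norm -/
def gN {E F : Type*} [NormedAddCommGroup E] [NormedAddCommGroup F] (θ : F × E × ℝ) : ℝ :=
  ‖θ.1‖ ^ 2 + ‖θ.2.1‖ ^ 2 + θ.2.2 ^ 2

lemma aux_amgm (t x y : ℝ) (ht : 0 < t) : x * y ≤ (t * x ^ 2 + y ^ 2 / t) / 2 := by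
  have h : (t * x ^ 2 + y ^ 2 / t) / 2 - x * y = (t * x - y) ^ 2 / t / 2 := by
    field_simp
    ring
  have : 0 ≤ (t * x - y) ^ 2 / t / 2 := by positivity
  linarith

lemma aux_opt (x a b c k : ℝ) (hk : 0 ≤ k)
    (h : ∀ t > 0, x ≤ a + b * (t * k) + c / t) : x ≤ a + (b + c) * √k := by
  rcases hk.eq_or_lt with rfl | hk
  · simp only [mul_zero, add_zero, Real.sqrt_zero] at h ⊢
    have h1 : Filter.Tendsto (fun t : ℝ => a + c / t) Filter.atTop (nhds (a + 0)) :=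
      (tendsto_const_nhds).add (Filter.Tendsto.const_div_atTop Filter.tendsto_id c)
    rw [add_zero] at h1
    refine ge_of_tendsto h1 ?_
    filter_upwards [Filter.eventually_gt_atTop 0] with t ht using h t ht
  · have hs : 0 < √k := Real.sqrt_pos.2 hk
    have := h (1 / √k) (by positivity)
    have e : 1 / √k * k = √k := by
      rw [div_mul_eq_mul_div, one_mul, Real.div_sqrt]
    rw [e, div_div_eq_mul_div, div_one] at this
    linarith

lemma aux_lip_s15 (C1 : ℝ) (σ0 : ℝ → ℝ) (hσ : ContDiff ℝ 2 σ0)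
    (h1 : ∀ x : ℝ, |deriv σ0 x| ≤ C1) (x y : ℝ) : |σ0 x - σ0 y| ≤ C1 * |x - y| := by
  have := Convex.norm_image_sub_le_of_norm_deriv_le (f := σ0) (s := Set.univ) (C := C1)
    (fun x _ => (hσ.differentiable (by norm_num)) x) (fun x _ => h1 x) convex_univ
    (Set.mem_univ y) (Set.mem_univ x)
  simpa [Real.norm_eq_abs] using this

section
variable {E F : Type*} [NormedAddCommGroup E] [InnerProductSpace ℝ E] 
  [NormedAddCommGroup F] [NormedSpace ℝ F]

lemma aux_bd (C1 : ℝ) (hC1 : 0 < C1) (σ0 : ℝ → ℝ) (h0 : ∀ x : ℝ, |σ0 x| ≤ C1 * max |x| 1)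
    (w z : E) (b : ℝ) : |σ0 (⟪w, z⟫ + b)| ≤ C1 * (‖w‖ * ‖z‖ + |b| + 1) := by
  refine (h0 _).trans (mul_le_mul_of_nonneg_left ?_ hC1.le)
  have h1 : |⟪w, z⟫ + b| ≤ ‖w‖ * ‖z‖ + |b| :=
    (abs_add_le _ _).trans (by gcongr; exact abs_real_inner_le_norm w z)
  apply max_le
  · linarith
  · have : 0 ≤ ‖w‖ * ‖z‖ := by positivity
    linarith [abs_nonneg b]

lemma aux_norm_bd (C1 : ℝ) (hC1 : 0 < C1) (σ0 : ℝ → ℝ) (h0 : ∀ x : ℝ, |σ0 x| ≤ C1 * max |x| 1)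
    (z : E) (θ : F × E × ℝ) :
    ‖σ0 (⟪θ.2.1, z⟫ + θ.2.2) • θ.1‖ ≤ C1 * (gN θ * ‖z‖ + 2 * gN θ + 1) := by
  obtain ⟨u, w, b⟩ := θ
  simp only [gN, norm_smul, Real.norm_eq_abs]
  have h := aux_bd C1 hC1 σ0 h0 w z b
  calc _ ≤ C1 * (‖w‖ * ‖z‖ + |b| + 1) * ‖u‖ := by gcongr
    _ = C1 * ((‖w‖ * ‖u‖) * ‖z‖ + |b| * ‖u‖ + ‖u‖) := by ring
    _ ≤ _ := by
      have := sq_abs b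

      have e : C1 * ((‖w‖ * ‖u‖) * ‖z‖ + |b| * ‖u‖ + ‖u‖) ≤ C1 * ((‖u‖ ^ 2 + ‖w‖ ^ 2 + b ^ 2) * ‖z‖ + 2 * (‖u‖ ^ 2 + ‖w‖ ^ 2 + b ^ 2) + 1) := by
        rw [add_assoc, add_assoc]
        refine mul_le_mul_of_nonneg_left (add_le_add
          (mul_le_mul_of_nonneg_right ?_ (norm_nonneg z)) ?_) hC1.le
        · nlinarith [sq_nonneg (‖w‖ - ‖u‖), sq_nonneg b]
        · nlinarith [sq_nonneg (|b| - ‖u‖), sq_nonneg (‖u‖ - 1), sq_nonneg ‖w‖]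
      exact e

lemma aux_pt (C1 : ℝ) (hC1 : 0 < C1) (σ0 : ℝ → ℝ) (hσ : ContDiff ℝ 2 σ0)
    (h0 : ∀ x : ℝ, |σ0 x| ≤ C1 * max |x| 1)
    (h1 : ∀ x : ℝ, |deriv σ0 x| ≤ C1) (R : ℝ) (hR : 1 ≤ R)
    (z z' : E) (hz : ‖z'‖ ≤ R) (θ θ' : F × E × ℝ) (t : ℝ) (ht : 0 < t) :
    ‖σ0 (⟪θ.2.1, z⟫ + θ.2.2) • θ.1 - σ0 (⟪θ'.2.1, z'⟫ + θ'.2.2) • θ'.1‖ ≤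
      C1 * ‖z - z'‖ * gN θ +
        C1 * R * (3 * t * gN (θ - θ') + (gN θ + gN θ' + 1) / t) := by
  obtain ⟨u, w, b⟩ := θ
  obtain ⟨u', w', b'⟩ := θ'
  simp only [gN, Prod.mk_sub_mk]
  have e : σ0 (⟪w, z⟫ + b) • u - σ0 (⟪w', z'⟫ + b') • u'
     = (σ0 (⟪w, z⟫ + b) - σ0 (⟪w', z'⟫ + b')) • u + σ0 (⟪w', z'⟫ + b') • (u - u') := by
    rw [sub_smul, smul_sub]; abel
  rw [e]
  have hl : |σ0 (⟪w, z⟫ + b) - σ0 (⟪w', z'⟫ + b')| ≤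
      C1 * (‖w‖ * ‖z - z'‖ + ‖w - w'‖ * R + |b - b'|) := by
    refine (aux_lip_s15 C1 σ0 hσ h1 _ _).trans (mul_le_mul_of_nonneg_left ?_ hC1.le)
    have e2 : ⟪w, z⟫ + b - (⟪w', z'⟫ + b') = ⟪w, z - z'⟫ + ⟪w - w', z'⟫ + (b - b') := by
      rw [inner_sub_right, inner_sub_left]; ring
    rw [e2]
    refine (abs_add_three _ _ _).trans ?_
    gcongr
    · exact abs_real_inner_le_norm _ _
    · exact (abs_real_inner_le_norm _ _).trans (by gcongr)
  have hb : |σ0 (⟪w', z'⟫ + b')| ≤ C1 * (‖w'‖ * R + |b'| + 1) :=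
    (aux_bd C1 hC1 σ0 h0 w' z' b').trans (by gcongr)
  have i1 := aux_amgm t ‖w - w'‖ ‖u‖ ht
  have i2 := aux_amgm t |b - b'| ‖u‖ ht
  have i3 := aux_amgm t ‖u - u'‖ ‖w'‖ ht
  have i4 := aux_amgm t ‖u - u'‖ |b'| ht
  have i5 := aux_amgm t ‖u - u'‖ 1 ht
  rw [sq_abs] at i2 i4
  have R0 : 0 ≤ R := by linarith
  calc _ ≤ |σ0 (⟪w, z⟫ + b) - σ0 (⟪w', z'⟫ + b')| * ‖u‖ + |σ0 (⟪w', z'⟫ + b')| * ‖u - u'‖ := by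
        refine (norm_add_le _ _).trans ?_
        rw [norm_smul, norm_smul, Real.norm_eq_abs, Real.norm_eq_abs]
    _ ≤ C1 * (‖w‖ * ‖z - z'‖ + ‖w - w'‖ * R + |b - b'|) * ‖u‖ 
        + C1 * (‖w'‖ * R + |b'| + 1) * ‖u - u'‖ := by gcongr
    _ ≤ C1 * (‖w‖ * ‖z - z'‖ + ‖w - w'‖ * R + |b - b'| * R) * ‖u‖ 
        + C1 * (‖w'‖ * R + |b'| * R + 1 * R) * ‖u - u'‖ := by
        gcongr
        · exact le_mul_of_one_le_right (abs_nonneg _) hR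
        · exact le_mul_of_one_le_right (abs_nonneg _) hR
        · linarith
    _ = C1 * ‖z - z'‖ * (‖w‖ * ‖u‖) + C1 * R * (‖w - w'‖ * ‖u‖ + |b - b'| * ‖u‖
         + ‖u - u'‖ * ‖w'‖ + ‖u - u'‖ * |b'| + ‖u - u'‖ * 1) := by ring
    _ ≤ _ := by
        refine add_le_add (mul_le_mul_of_nonneg_left ?_ (by positivity))
          (mul_le_mul_of_nonneg_left ?_ (by positivity))
        · nlinarith [sq_nonneg (‖w‖ - ‖u‖), sq_nonneg b]
        · have p1 : 0 ≤ t * ‖w - w'‖ ^ 2 := by positivity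
          have p2 : 0 ≤ t * ‖u - u'‖ ^ 2 := by positivity
          have p3 : 0 ≤ t * (b - b') ^ 2 := by positivity
          have q1 : 0 ≤ ‖w‖ ^ 2 / t := by positivity
          have q2 : 0 ≤ ‖u‖ ^ 2 / t := by positivity
          have q3 : 0 ≤ b ^ 2 / t := by positivity
          have q1' : 0 ≤ ‖w'‖ ^ 2 / t := by positivity
          have q2' : 0 ≤ ‖u'‖ ^ 2 / t := by positivity
          have q3' : 0 ≤ b' ^ 2 / t := by positivity
          have q4 : 0 ≤ 1 / t := by positivity
          simp only [add_div, mul_add, one_pow] at i1 i2 i3 i4 i5 ⊢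
          linarith

variable [MeasurableSpace E] [BorelSpace E] [SecondCountableTopology E]
  [MeasurableSpace F] [BorelSpace F] [SecondCountableTopology F]

lemma aux_meas (σ0 : ℝ → ℝ) (hσ : ContDiff ℝ 2 σ0) (z : E) (μ : Measure (F × E × ℝ)) :
    AEStronglyMeasurable (fun θ : F × E × ℝ => σ0 (⟪θ.2.1, z⟫ + θ.2.2) • θ.1) μ := by
  have := hσ.continuous
  exact Continuous.aestronglyMeasurable (by fun_prop)

lemma aux_int_s15 (C1 : ℝ) (hC1 : 0 < C1) (σ0 : ℝ → ℝ) (hσ : ContDiff ℝ 2 σ0)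
    (h0 : ∀ x : ℝ, |σ0 x| ≤ C1 * max |x| 1) (z : E) (μ : Measure (F × E × ℝ))
    [IsProbabilityMeasure μ] (hμ : Integrable gN μ) :
    Integrable (fun θ : F × E × ℝ => σ0 (⟪θ.2.1, z⟫ + θ.2.2) • θ.1) μ := by
  refine Integrable.mono' (g := fun θ => C1 * (gN θ * ‖z‖ + 2 * gN θ + 1)) ?_
    (aux_meas σ0 hσ z μ) (Filter.Eventually.of_forall (aux_norm_bd C1 hC1 σ0 h0 z))
  exact (((hμ.mul_const _).add (hμ.const_mul _)).add (integrable_const _)).const_mul _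

lemma aux_int_bd (C1 : ℝ) (hC1 : 0 < C1) (σ0 : ℝ → ℝ)
    (h0 : ∀ x : ℝ, |σ0 x| ≤ C1 * max |x| 1) (z : E) (μ : Measure (F × E × ℝ))
    [IsProbabilityMeasure μ] (hμ : Integrable gN μ) (V : ℝ) (hV : ∫ θ, gN θ ∂μ ≤ V) :
    ‖∫ θ : F × E × ℝ, σ0 (⟪θ.2.1, z⟫ + θ.2.2) • θ.1 ∂μ‖ ≤ C1 * (V * ‖z‖ + 2 * V + 1) := by
  have i1 := hμ.mul_const ‖z‖
  have i2 := hμ.const_mul 2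
  have i3 : Integrable (fun θ => gN θ * ‖z‖ + 2 * gN θ) μ := i1.add i2
  refine (norm_integral_le_of_norm_le (g := fun θ => C1 * (gN θ * ‖z‖ + 2 * gN θ + 1))
    (((i1.add i2).add (integrable_const _)).const_mul _)
    (Filter.Eventually.of_forall (aux_norm_bd C1 hC1 σ0 h0 z))).trans ?_
  rw [integral_const_mul, integral_add i3 (integrable_const _), integral_add i1 i2,
    integral_mul_const, integral_const_mul]
  simp only [integral_const, probReal_univ, smul_eq_mul, mul_one]
  gcongr

lemma aux_key (C1 : ℝ) (hC1 : 0 < C1) (σ0 : ℝ → ℝ) (hσ : ContDiff ℝ 2 σ0)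
    (h0 : ∀ x : ℝ, |σ0 x| ≤ C1 * max |x| 1)
    (h1 : ∀ x : ℝ, |deriv σ0 x| ≤ C1) (R : ℝ) (hR : 1 ≤ R)
    (z z' : E) (hz : ‖z'‖ ≤ R) (μ μ' : Measure (F × E × ℝ))
    [IsProbabilityMeasure μ] [IsProbabilityMeasure μ'] (V : ℝ)
    (hμ : Integrable gN μ) (hV : ∫ θ, gN θ ∂μ ≤ V)
    (hμ' : Integrable gN μ') (hV' : ∫ θ, gN θ ∂μ' ≤ V)
    (P : Measure ((F × E × ℝ) × (F × E × ℝ)))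
    (hP1 : P.map Prod.fst = μ) (hP2 : P.map Prod.snd = μ') (K : ℝ) (hK : 0 ≤ K)
    (hD : Integrable (fun q => gN (q.1 - q.2)) P) (hDK : ∫ q, gN (q.1 - q.2) ∂P ≤ 4 * K) :
    ‖(∫ θ : F × E × ℝ, σ0 (⟪θ.2.1, z⟫ + θ.2.2) • θ.1 ∂μ)
      - ∫ θ : F × E × ℝ, σ0 (⟪θ.2.1, z'⟫ + θ.2.2) • θ.1 ∂μ'‖ ≤
      C1 * V * ‖z - z'‖ + C1 * R * (13 + 2 * V) * √K := by
  have hPp : IsProbabilityMeasure P := by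
    constructor
    have : P.map Prod.fst Set.univ = 1 := by rw [hP1]; exact measure_univ
    rwa [Measure.map_apply measurable_fst MeasurableSet.univ, Set.preimage_univ] at this
  have f1 := aux_int_s15 C1 hC1 σ0 hσ h0 z μ hμ
  have f2 := aux_int_s15 C1 hC1 σ0 hσ h0 z' μ' hμ'
  have m1 := aux_meas σ0 hσ z μ
  have m2 := aux_meas σ0 hσ z' μ'
  have n1 : Integrable (fun q : (F × E × ℝ) × (F × E × ℝ) => gN q.1) P := by
    rw [← hP1] at hμ; exact hμ.comp_measurable measurable_fst
  have n2 : Integrable (fun q : (F × E × ℝ) × (F × E × ℝ) => gN q.2) P := by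
    rw [← hP2] at hμ'; exact hμ'.comp_measurable measurable_snd
  have e1 : ∫ q, gN q.1 ∂P ≤ V := by
    rw [← hP1, integral_map measurable_fst.aemeasurable (by rw [hP1]; exact hμ.1)] at hV
    exact hV
  have e2 : ∫ q, gN q.2 ∂P ≤ V := by
    rw [← hP2, integral_map measurable_snd.aemeasurable (by rw [hP2]; exact hμ'.1)] at hV'
    exact hV'
  have g1 : Integrable (fun q : (F × E × ℝ) × (F × E × ℝ) =>
      σ0 (⟪q.1.2.1, z⟫ + q.1.2.2) • q.1.1) P := by
    rw [← hP1] at f1; exact f1.comp_measurable measurable_fst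
  have g2 : Integrable (fun q : (F × E × ℝ) × (F × E × ℝ) =>
      σ0 (⟪q.2.2.1, z'⟫ + q.2.2.2) • q.2.1) P := by
    rw [← hP2] at f2; exact f2.comp_measurable measurable_snd
  rw [← hP1] at m1
  rw [← hP2] at m2
  have j1 := integral_map measurable_fst.aemeasurable m1
  have j2 := integral_map measurable_snd.aemeasurable m2
  rw [hP1] at j1
  rw [hP2] at j2
  rw [j1, j2, ← integral_sub g1 g2]
  have : C1 * R * (13 + 2 * V) = C1 * R * 12 + C1 * R * (2 * V + 1) := by ring
  rw [this]
  refine aux_opt _ _ _ _ _ hK (fun t ht => ?_)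
  have R0 : 0 ≤ R := by linarith
  have k1 := n1.const_mul (C1 * ‖z - z'‖)
  have k2 := hD.const_mul (3 * t)
  have k0 : Integrable (fun q : (F × E × ℝ) × (F × E × ℝ) => gN q.1 + gN q.2) P := n1.add n2
  have k3 : Integrable (fun q : (F × E × ℝ) × (F × E × ℝ) => (gN q.1 + gN q.2 + 1) / t) P :=
    (k0.add (integrable_const (1 : ℝ))).div_const t
  have k4 : Integrable (fun q : (F × E × ℝ) × (F × E × ℝ) =>
      C1 * R * (3 * t * gN (q.1 - q.2) + (gN q.1 + gN q.2 + 1) / t)) P :=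
    (k2.add k3).const_mul (C1 * R)
  refine (norm_integral_le_of_norm_le (k1.add k4)
    (Filter.Eventually.of_forall fun q =>
      aux_pt C1 hC1 σ0 hσ h0 h1 R hR z z' hz q.1 q.2 t ht)).trans ?_
  simp only [Pi.add_apply]
  rw [integral_add k1 k4, integral_const_mul, integral_const_mul, integral_add k2 k3,
    integral_const_mul, integral_div, integral_add k0 (integrable_const _), integral_add n1 n2]
  simp only [integral_const, probReal_univ, smul_eq_mul, mul_one]
  calc _ ≤ C1 * ‖z - z'‖ * V + C1 * R * (3 * t * (4 * K) + (V + V + 1) / t) := by gcongr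
    _ = _ := by ring
end

/-- comparison of the network outputs for two parameter configurations in terms
of `√KL(τ‖τ')` and `√K`, with a constant `C` depending only on `d`, `C1`, `α`, `V` and `T`. -/
theorem statement15 (d : ℕ) (hd : 1 ≤ d) (C1 : ℝ) (hC1 : 0 < C1)
    (α : ℝ) (hα : 0 < α) (V T : ℝ) :
    ∃ C > 0, ∀ σ0 : ℝ → ℝ, ContDiff ℝ 2 σ0 →
      (∀ x : ℝ, |σ0 x| ≤ C1 * max |x| 1) →
      (∀ x : ℝ, |deriv σ0 x| ≤ C1) →
      (∀ x : ℝ, |deriv (deriv σ0) x| ≤ C1) →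
      ∀ τ τ' : Measure (ℝ × EuclideanSpace ℝ (Fin d) × ℝ),
      IsProbabilityMeasure τ → IsProbabilityMeasure τ' →
      (Integrable (fun ω => omegaNormSq d ω) τ ∧ ∫ ω, omegaNormSq d ω ∂τ ≤ T) →
      (Integrable (fun ω => omegaNormSq d ω) τ' ∧ ∫ ω, omegaNormSq d ω ∂τ' ≤ T) →
      ∀ ν ν' : ℝ → Measure (EuclideanSpace ℝ (Fin d) × EuclideanSpace ℝ (Fin d) × ℝ),
      (∀ s, IsProbabilityMeasure (ν s)) → (∀ s, IsProbabilityMeasure (ν' s)) →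
      (∀ s ∈ Set.Icc (0 : ℝ) 1,
        Integrable (fun θ => thetaNormSq d θ) (ν s) ∧ ∫ θ, thetaNormSq d θ ∂(ν s) ≤ V) →
      (∀ s ∈ Set.Icc (0 : ℝ) 1,
        Integrable (fun θ => thetaNormSq d θ) (ν' s) ∧ ∫ θ, thetaNormSq d θ ∂(ν' s) ≤ V) →
      ∀ x : EuclideanSpace ℝ (Fin d), ‖x‖ ≤ 1 →
      ∀ z z' : ℝ → EuclideanSpace ℝ (Fin d),
      z 0 = x → z' 0 = x →
      (∀ s ∈ Set.Icc (0 : ℝ) 1, Integrable (sigmaV d σ0 (z s)) (ν s)) →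
      (∀ s ∈ Set.Icc (0 : ℝ) 1, Integrable (sigmaV d σ0 (z' s)) (ν' s)) →
      (∀ s ∈ Set.Icc (0 : ℝ) 1,
        HasDerivWithinAt z (α • ∫ θ, sigmaV d σ0 (z s) θ ∂(ν s)) (Set.Icc (0 : ℝ) 1) s) →
      (∀ s ∈ Set.Icc (0 : ℝ) 1,
        HasDerivWithinAt z' (α • ∫ θ, sigmaV d σ0 (z' s) θ ∂(ν' s)) (Set.Icc (0 : ℝ) 1) s) →
      -- KL(τ‖τ') < ∞ :
      τ ≪ τ' →
      Integrable (fun ω => Real.log ((τ.rnDeriv τ' ω).toReal)) τ →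
      -- a coupling π of (τ, τ') with ∫ ‖ω − ω'‖₂² dπ ≤ 4 KL(τ‖τ') :
      ∀ Pi : Measure ((ℝ × EuclideanSpace ℝ (Fin d) × ℝ) × (ℝ × EuclideanSpace ℝ (Fin d) × ℝ)),
      Pi.map Prod.fst = τ → Pi.map Prod.snd = τ' →
      Integrable (fun q => omegaNormSq d (q.1 - q.2)) Pi →
      (∫ q, omegaNormSq d (q.1 - q.2) ∂Pi) ≤ 4 * klReal τ τ' →
      -- K ≥ 0 and, for each s, a coupling π_s of (ν_s, ν'_s) with ∫ ‖θ − θ'‖₂² dπ_s ≤ 4K :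
      ∀ K : ℝ, 0 ≤ K →
      ∀ Pis : ℝ → Measure ((EuclideanSpace ℝ (Fin d) × EuclideanSpace ℝ (Fin d) × ℝ) ×
                           (EuclideanSpace ℝ (Fin d) × EuclideanSpace ℝ (Fin d) × ℝ)),
      (∀ s ∈ Set.Icc (0 : ℝ) 1,
        (Pis s).map Prod.fst = ν s ∧ (Pis s).map Prod.snd = ν' s ∧
        Integrable (fun q => thetaNormSq d (q.1 - q.2)) (Pis s) ∧
        ∫ q, thetaNormSq d (q.1 - q.2) ∂(Pis s) ≤ 4 * K) →
      (∫ ω, ω.1 * σ0 (⟪ω.2.1, z 1⟫ + ω.2.2) ∂τ) -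
          (∫ ω, ω.1 * σ0 (⟪ω.2.1, z' 1⟫ + ω.2.2) ∂τ') ≤
        C * (Real.sqrt (klReal τ τ') + Real.sqrt K) := by
  set V' : ℝ := |V| + 1 with hV'
  set T' : ℝ := |T| + 1 with hT'
  have hVV : V ≤ V' := by linarith [le_abs_self V]
  have hTT : T ≤ T' := by linarith [le_abs_self T]
  have hVp : 0 < V' := by linarith [abs_nonneg V]
  have hTp : 0 < T' := by linarith [abs_nonneg T]
  clear_value V' T'
  set kz : ℝ := α * C1 * V' with hkz
  set ez : ℝ := α * C1 * (2 * V' + 1) with hez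
  have hkp : 0 < kz := by positivity
  have hep : 0 < ez := by positivity
  set R : ℝ := max 1 (gronwallBound 1 kz ez 1) with hRdef
  have hR : 1 ≤ R := le_max_left _ _
  have hR0 : 0 < R := by linarith
  set B : ℝ := C1 * R * (13 + 2 * V') with hB
  have hBp : 0 < B := by positivity
  set G : ℝ := α * B / kz * (Real.exp kz - 1) with hG
  have hGp : 0 ≤ G := by
    have : 0 ≤ Real.exp kz - 1 := by linarith [Real.one_le_exp hkp.le]
    positivity
  refine ⟨C1 * T' * G + C1 * R * (13 + 2 * T'), by positivity, ?_⟩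
  intro σ0 hσ h0 h1 _ τ τ' hτ hτ' hτT hτT' ν ν' hν hν' hνV hνV' x hx z z' hz0 hz0' _ _ hzd hzd'
    _ _ P hP1 hP2 hPI hPK K hK Pis hPis
  have eN : (fun θ => thetaNormSq d θ) = gN := rfl
  -- a priori bound
  have apriori : ∀ (ρ : ℝ → Measure (EuclideanSpace ℝ (Fin d) × EuclideanSpace ℝ (Fin d) × ℝ))
      (y : ℝ → EuclideanSpace ℝ (Fin d)), (∀ s, IsProbabilityMeasure (ρ s)) →
      (∀ s ∈ Set.Icc (0 : ℝ) 1,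
        Integrable (fun θ => thetaNormSq d θ) (ρ s) ∧ ∫ θ, thetaNormSq d θ ∂(ρ s) ≤ V) →
      y 0 = x → (∀ s ∈ Set.Icc (0 : ℝ) 1,
        HasDerivWithinAt y (α • ∫ θ, sigmaV d σ0 (y s) θ ∂(ρ s)) (Set.Icc (0 : ℝ) 1) s) →
      ∀ s ∈ Set.Icc (0 : ℝ) 1, ‖y s‖ ≤ R := by
    intro ρ y hρ hρV hy hyd s hs
    have := norm_le_gronwallBound_of_norm_deriv_right_le (f := y)
      (f' := fun s => α • ∫ θ, sigmaV d σ0 (y s) θ ∂(ρ s)) (δ := 1) (K := kz) (ε := ez)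
      (a := 0) (b := 1) (fun s hs => (hyd s hs).continuousWithinAt)
      (fun s hs => (hyd s ⟨hs.1, hs.2.le⟩).mono_of_mem_nhdsWithin (Icc_mem_nhdsGE_of_mem hs))
      (by rw [hy]; exact hx)
      (fun s hs => by
        have hs' : s ∈ Set.Icc (0 : ℝ) 1 := ⟨hs.1, hs.2.le⟩
        have := hρ s
        have hb := aux_int_bd C1 hC1 σ0 h0 (y s) (ρ s) (hρV s hs').1 V'
          ((hρV s hs').2.trans hVV)
        rw [norm_smul, Real.norm_of_nonneg hα.le]
        calc _ ≤ α * (C1 * (V' * ‖y s‖ + 2 * V' + 1)) := mul_le_mul_of_nonneg_left hb hα.le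
          _ = _ := by rw [hkz, hez]; ring) s hs
    refine this.trans (le_trans ?_ (le_max_right _ _))
    apply gronwallBound_mono zero_le_one hep.le hkp.le
    linarith [hs.2]
  have bz' := apriori ν' z' hν' hνV' hz0' hzd'
  have diff := norm_le_gronwallBound_of_norm_deriv_right_le (f := fun s => z s - z' s)
      (f' := fun s => (α • ∫ θ, sigmaV d σ0 (z s) θ ∂(ν s)) - α • ∫ θ, sigmaV d σ0 (z' s) θ ∂(ν' s))
      (δ := 0) (K := kz) (ε := α * B * √K)
      (a := 0) (b := 1) (fun s hs => ((hzd s hs).sub (hzd' s hs)).continuousWithinAt)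
      (fun s hs => ((hzd s ⟨hs.1, hs.2.le⟩).sub (hzd' s ⟨hs.1, hs.2.le⟩)).mono_of_mem_nhdsWithin
        (Icc_mem_nhdsGE_of_mem hs))
      (by simp [hz0, hz0'])
      (fun s hs => by
        have hs' : s ∈ Set.Icc (0 : ℝ) 1 := ⟨hs.1, hs.2.le⟩
        have := hν s
        have := hν' s
        obtain ⟨p1, p2, p3, p4⟩ := hPis s hs'
        have hb := aux_key C1 hC1 σ0 hσ h0 h1 R hR (z s) (z' s) (bz' s hs') (ν s) (ν' s) V'
          (hνV s hs').1 ((hνV s hs').2.trans hVV) (hνV' s hs').1 ((hνV' s hs').2.trans hVV)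
          (Pis s) p1 p2 K hK p3 p4
        rw [← smul_sub, norm_smul, Real.norm_of_nonneg hα.le]
        calc _ ≤ α * (C1 * V' * ‖z s - z' s‖ + C1 * R * (13 + 2 * V') * √K) :=
              mul_le_mul_of_nonneg_left hb hα.le
          _ = _ := by rw [hkz, hB]; ring) 1 ⟨zero_le_one, le_rfl⟩
  rw [gronwallBound_of_K_ne_0 hkp.ne'] at diff
  have diff' : ‖z 1 - z' 1‖ ≤ G * √K := by
    refine diff.trans (le_of_eq ?_)
    simp only [sub_zero, mul_one, zero_mul, zero_add]
    rw [hG]; ring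
  have eO : ∀ ω : ℝ × EuclideanSpace ℝ (Fin d) × ℝ, omegaNormSq d ω = gN ω := by
    intro ω; simp [omegaNormSq, gN]
  simp only [eO] at hτT hτT' hPI hPK
  have kl0 : 0 ≤ klReal τ τ' := by
    have : 0 ≤ ∫ q, gN (q.1 - q.2) ∂P := integral_nonneg fun q => by
      simp only [gN, Pi.zero_apply]; positivity
    linarith
  have fin := aux_key C1 hC1 σ0 hσ h0 h1 R hR (z 1) (z' 1) (bz' 1 ⟨zero_le_one, le_rfl⟩) τ τ' T'
    hτT.1 (hτT.2.trans hTT) hτT'.1 (hτT'.2.trans hTT) P hP1 hP2 (klReal τ τ') kl0 hPI hPK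
  simp only [smul_eq_mul, mul_comm (σ0 _)] at fin
  refine (Real.le_norm_self _).trans (fin.trans ?_)
  have s1 := Real.sqrt_nonneg K
  have s2 := Real.sqrt_nonneg (klReal τ τ')
  have a1 : C1 * T' * ‖z 1 - z' 1‖ ≤ C1 * T' * (G * √K) := by gcongr
  have a2 : 0 ≤ C1 * R * (13 + 2 * T') * √K := by positivity
  have a3 : 0 ≤ C1 * T' * G * √(klReal τ τ') := by positivity
  linarith


end
end

section
/- Let A > 0 and c > 0, and let u : [0,∞) → ℝ be differentiable with u(t) ≥ 0 for all t, u(0) = 0, and u'(t) ≤ A·exp(−c·t)·√(u(t)) for all t ≥ 0. Then u(t) ≤ A²/(4c²) for all t ≥ 0. -/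
open Real Set

/-- Gronwall-type comparison. If `u : [0,∞) → ℝ` is differentiable,
nonnegative, `u(0) = 0`, and `u'(t) ≤ A e^{−ct} √(u(t))` for all `t ≥ 0`, then
`u(t) ≤ A²/(4c²)` for all `t ≥ 0`. -/
theorem statement17 (A c : ℝ) (hA : 0 < A) (hc : 0 < c)
    (u u' : ℝ → ℝ)
    (hnonneg : ∀ t, 0 ≤ t → 0 ≤ u t)
    (h0 : u 0 = 0)
    (hderiv : ∀ t, 0 ≤ t → HasDerivWithinAt u (u' t) (Set.Ici (0 : ℝ)) t)
    (hbound : ∀ t, 0 ≤ t → u' t ≤ A * Real.exp (-c * t) * Real.sqrt (u t)) :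
    ∀ t, 0 ≤ t → u t ≤ A ^ 2 / (4 * c ^ 2) := by
  intro t ht
  have key : ∀ δ : ℝ, 0 < δ → Real.sqrt (u t) ≤ A / (2 * c) + δ := by
    intro δ hδ
    have hpos : ∀ x, 0 ≤ x → 0 < u x + δ ^ 2 := fun x hx => by
      have := hnonneg x hx
      positivity
    have hd : ∀ x, 0 ≤ x → HasDerivWithinAt
        (fun x => Real.sqrt (u x + δ ^ 2) + A / (2 * c) * Real.exp (-c * x))
        (u' x / (2 * Real.sqrt (u x + δ ^ 2)) + A / (2 * c) * (Real.exp (-c * x) * (-c * 1)))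
        (Set.Ici (0 : ℝ)) x := by
      intro x hx
      have h1 := ((hderiv x hx).add_const (δ ^ 2)).sqrt (hpos x hx).ne'
      have h2 := ((((hasDerivAt_id x).const_mul (-c)).exp).const_mul
        (A / (2 * c))).hasDerivWithinAt (s := Set.Ici (0 : ℝ))
      exact h1.add h2
    have hanti : AntitoneOn
        (fun x => Real.sqrt (u x + δ ^ 2) + A / (2 * c) * Real.exp (-c * x))
        (Set.Ici (0 : ℝ)) := by
      refine antitoneOn_of_hasDerivWithinAt_nonpos (convex_Ici 0)
        (fun x hx => (hd x hx).continuousWithinAt)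
        (fun x hx => (hd x (interior_subset hx)).mono interior_subset) ?_
      intro x hx
      have hx0 : 0 ≤ x := interior_subset hx
      have hs : 0 < Real.sqrt (u x + δ ^ 2) := Real.sqrt_pos.2 (hpos x hx0)
      have hle : Real.sqrt (u x) ≤ Real.sqrt (u x + δ ^ 2) :=
        Real.sqrt_le_sqrt (by nlinarith [sq_nonneg δ])
      have h1 : u' x ≤ A * Real.exp (-c * x) * Real.sqrt (u x + δ ^ 2) :=
        (hbound x hx0).trans (mul_le_mul_of_nonneg_left hle (by positivity))
      have h2 : u' x / (2 * Real.sqrt (u x + δ ^ 2)) ≤ A * Real.exp (-c * x) / 2 := by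
        rw [div_le_iff₀ (by positivity)]
        linarith
      have h3 : A / (2 * c) * (Real.exp (-c * x) * (-c * 1))
          = -(A * Real.exp (-c * x) / 2) := by
        field_simp
      linarith
    have h := hanti (Set.mem_Ici.2 le_rfl) (Set.mem_Ici.2 ht) ht
    simp only [h0, zero_add, mul_zero, Real.exp_zero, mul_one, Real.sqrt_sq hδ.le] at h
    have h4 : 0 ≤ A / (2 * c) * Real.exp (-c * t) := by positivity
    have h5 : Real.sqrt (u t) ≤ Real.sqrt (u t + δ ^ 2) :=
      Real.sqrt_le_sqrt (by nlinarith [sq_nonneg δ])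
    linarith
  have h := le_of_forall_pos_le_add key
  have h6 := Real.sq_sqrt (hnonneg t ht)
  calc u t = Real.sqrt (u t) ^ 2 := h6.symm
    _ ≤ (A / (2 * c)) ^ 2 := pow_le_pow_left₀ (Real.sqrt_nonneg _) h 2
    _ = A ^ 2 / (4 * c ^ 2) := by rw [div_pow, mul_pow]; norm_num
end
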